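/- Let θ be an irrational real number. Then the fractional parts of p θ, as p ranges over the primes, are uniformly distributed in (0,1): for every 0 ≤ a < b ≤ 1, the number of primes p among the first ℓ primes with frac(pθ) ∈ (a,b), divided by ℓ, tends to b − a as ℓ → ∞. -/

import Mathlib

open Filter

/-!
By Weyl's criterion it is enough that `∑ e(pα)`, over the primes `p ≤ N`, is `o(π(N))` for every
irrational `α`. For each `N`, choose a Dirichlet denominator `q` of `α`, which tends to infinity
with `N` as `α` is irrational, and let `z = N ^ ε`. Among the integers `n ≤ N` without prime factors
below `z`, the identity `log rad n = ∑_{p ∣ n} log p`, whose left-hand side is `log n` unless `n` is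
divisible by the square of a large prime, compares the sum of `log p e(pα)` over primes with

* the sum of `log n e(nα)` over all these rough integers, which the Brun–Hooley sieve bounds by
  `o(N)`, since the sieve weights concentrate on frequencies that `q` keeps away from the integers;
* the bilinear sum of `log p e(mpα)` over primes `p ≥ z` and rough integers `m > 1`, which
  Cauchy–Schwarz treats in dyadic blocks. Both variables are majorised by a sieve, so no logarithm
  is lost, and the gain is a power of `q` up to a factor `(q / φ(q)) ^ 2`.

As no logarithm has to be compensated by the size of `q`, the Siegel–Walfisz theorem is not needed.
-/

open Finset
open scoped FourierTransform

/-! ### Divisor sums and the sieve -/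

/-- `f` is a divisor sum `f n = ∑ c i * 1_{d i ∣ n}` of level `D`, supported on moduli composed of
primes in `P` and with `∑ |c i| ≤ B`; its density `v = ∑ c i / d i` is the mean value of `f`. -/
def IsDivisorSum (P : Finset ℕ) (D B : ℝ) (f : ℕ → ℝ) (v : ℝ) : Prop :=
  ∃ (ι : Type) (_ : Fintype ι) (c : ι → ℝ) (d : ι → ℕ),
    (∀ i, d i ∈ Nat.factoredNumbers P) ∧ (∀ i, (d i : ℝ) ≤ D) ∧ ∑ i, |c i| ≤ B ∧
    (∀ n, f n = ∑ i, c i * (if d i ∣ n then 1 else 0)) ∧ v = ∑ i, c i / d i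

theorem coprime_of_mem_factoredNumbers {P : Finset ℕ} {d q : ℕ}
    (hd : d ∈ Nat.factoredNumbers P) (hq : q ≠ 0) (hPq : Disjoint P q.primeFactors) :
    d.Coprime q := by
  rw [Nat.mem_factoredNumbers_iff_primeFactors_subset] at hd
  exact (Nat.disjoint_primeFactors hd.1 hq).1 (disjoint_of_subset_left hd.2 hPq)

theorem abs_card_Ioc_filter_modEq_sub_le {a b r : ℕ} (v : ℕ) (hr : 0 < r) (hab : a ≤ b) :
    |(#{x ∈ Ioc a b | x ≡ v [MOD r]} : ℝ) - ((b : ℝ) - a) / r| ≤ 1 := by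
  have hmono : ((a : ℚ) - v) / r ≤ (b - v) / r := by gcongr
  have hcard := Nat.Ioc_filter_modEq_card a b hr v
  rw [max_eq_left (sub_nonneg.2 (Int.floor_mono hmono))] at hcard
  have hsub : ((b : ℚ) - a) / r = (b - v) / r - (a - v) / r := by ring
  have key : |(#{x ∈ Ioc a b | x ≡ v [MOD r]} : ℚ) - ((b : ℚ) - a) / r| ≤ 1 := by
    rw [← Int.cast_natCast, hcard, hsub, Int.cast_sub, abs_le]
    have := Int.floor_le (((b : ℚ) - v) / r)
    have := Int.floor_le (((a : ℚ) - v) / r)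
    have := Int.lt_floor_add_one (((b : ℚ) - v) / r)
    have := Int.lt_floor_add_one (((a : ℚ) - v) / r)
    constructor <;> linarith
  simpa using (Rat.cast_le (K := ℝ)).2 key

namespace IsDivisorSum

variable {P P' : Finset ℕ} {D D' B B' v v' : ℝ} {f g : ℕ → ℝ}

theorem mono (h : IsDivisorSum P D B f v) (hP : P ⊆ P') (hD : D ≤ D') (hB : B ≤ B') :
    IsDivisorSum P' D' B' f v := by
  obtain ⟨ι, _, c, d, hd, hdD, hc, hf, hv⟩ := h
  exact ⟨ι, _, c, d, fun i => ⟨(hd i).1, fun p hp => hP ((hd i).2 p hp)⟩,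
    fun i => (hdD i).trans hD, hc.trans hB, hf, hv⟩

theorem zero : IsDivisorSum P D 0 (fun _ => 0) 0 :=
  ⟨Empty, inferInstance, Empty.elim, Empty.elim, by simp, by simp, by simp, by simp, by simp⟩

theorem one (hD : 1 ≤ D) : IsDivisorSum P D 1 (fun _ => 1) 1 :=
  ⟨Unit, inferInstance, fun _ => 1, fun _ => 1, fun _ => by
    simp [Nat.mem_factoredNumbers_iff_primeFactors_subset],
    fun _ => by simpa using hD, by simp, by simp, by simp⟩

theorem const_mul (h : IsDivisorSum P D B f v) (a : ℝ) :
    IsDivisorSum P D (|a| * B) (fun n => a * f n) (a * v) := by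
  obtain ⟨ι, _, c, d, hd, hdD, hc, hf, hv⟩ := h
  refine ⟨ι, inferInstance, fun i => a * c i, d, hd, hdD, ?_, fun n => ?_, ?_⟩
  · simpa only [abs_mul, ← mul_sum] using mul_le_mul_of_nonneg_left hc (abs_nonneg a)
  · simp only [hf, mul_sum, mul_assoc]
  · simp only [hv, mul_sum, mul_div_assoc]

theorem add (h : IsDivisorSum P D B f v) (h' : IsDivisorSum P D B' g v') :
    IsDivisorSum P D (B + B') (fun n => f n + g n) (v + v') := by
  obtain ⟨ι, _, c, d, hd, hdD, hc, hf, hv⟩ := h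
  obtain ⟨κ, _, c', d', hd', hdD', hc', hf', hv'⟩ := h'
  refine ⟨ι ⊕ κ, inferInstance, Sum.elim c c', Sum.elim d d', Sum.rec hd hd', Sum.rec hdD hdD',
    ?_, fun n => ?_, ?_⟩ <;> simp only [Fintype.sum_sum_type, Sum.elim_inl, Sum.elim_inr]
  · exact add_le_add hc hc'
  · rw [hf, hf']
    congr!
  · rw [hv, hv']

theorem sum {κ : Type*} (s : Finset κ) {B v : κ → ℝ} {f : κ → ℕ → ℝ}
    (h : ∀ i ∈ s, IsDivisorSum P D (B i) (f i) (v i)) :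
    IsDivisorSum P D (∑ i ∈ s, B i) (fun n => ∑ i ∈ s, f i n) (∑ i ∈ s, v i) := by
  classical
  induction s using Finset.induction_on with
  | empty => exact zero
  | insert i s hi ih =>
    simp only [sum_insert hi]
    exact (h i (mem_insert_self i s)).add (ih fun j hj => h j (mem_insert_of_mem hj))

theorem mul (h : IsDivisorSum P D B f v) (h' : IsDivisorSum P' D' B' g v')
    (hPP' : Disjoint P P') :
    IsDivisorSum (P ∪ P') (D * D') (B * B') (fun n => f n * g n) (v * v') := by
  obtain ⟨ι, _, c, d, hd, hdD, hc, hf, hv⟩ := h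
  obtain ⟨κ, _, c', d', hd', hdD', hc', hf', hv'⟩ := h'
  simp only [Nat.mem_factoredNumbers_iff_primeFactors_subset] at hd hd'
  have hcop (i : ι) (j : κ) : (d i).Coprime (d' j) :=
    (Nat.disjoint_primeFactors (hd i).1 (hd' j).1).1
      (disjoint_of_subset_left (hd i).2 (disjoint_of_subset_right (hd' j).2 hPP'))
  have hdvd (i : ι) (j : κ) (n : ℕ) : d i * d' j ∣ n ↔ d i ∣ n ∧ d' j ∣ n :=
    ⟨fun h => ⟨dvd_of_mul_right_dvd h, dvd_of_mul_left_dvd h⟩,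
      fun h => (hcop i j).mul_dvd_of_dvd_of_dvd h.1 h.2⟩
  refine ⟨ι × κ, inferInstance, fun x => c x.1 * c' x.2, fun x => d x.1 * d' x.2, ?_, ?_, ?_,
    fun n => ?_, ?_⟩
  · rintro ⟨i, j⟩
    rw [Nat.mem_factoredNumbers_iff_primeFactors_subset,
      Nat.primeFactors_mul (hd i).1 (hd' j).1]
    exact ⟨mul_ne_zero (hd i).1 (hd' j).1, union_subset_union (hd i).2 (hd' j).2⟩
  · rintro ⟨i, j⟩
    rw [Nat.cast_mul]
    exact mul_le_mul (hdD i) (hdD' j) (Nat.cast_nonneg _) ((Nat.cast_nonneg _).trans (hdD i))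
  · simp only [abs_mul, Fintype.sum_prod_type, ← mul_sum, ← sum_mul]
    exact mul_le_mul hc hc' (sum_nonneg fun _ _ => abs_nonneg _)
      ((sum_nonneg fun _ _ => abs_nonneg _).trans hc)
  · simp only [hf, hf', sum_mul_sum, Fintype.sum_prod_type, hdvd]
    refine sum_congr rfl fun i _ => sum_congr rfl fun j _ => ?_
    by_cases hi : d i ∣ n <;> by_cases hj : d' j ∣ n <;> simp [hi, hj]
  · simp only [hv, hv', sum_mul_sum, Fintype.sum_prod_type, Nat.cast_mul, div_mul_div_comm]

/-- By the Chinese remainder theorem, divisibility by `d i` is independent of the class mod `q`. -/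
theorem abs_sum_Ioc_filter_modEq_sub_le (h : IsDivisorSum P D B f v) {q : ℕ} (hq : 0 < q)
    (hPq : Disjoint P q.primeFactors) {a b : ℕ} (hab : a ≤ b) (r : ℕ) :
    |∑ n ∈ Ioc a b with n ≡ r [MOD q], f n - ((b : ℝ) - a) / q * v| ≤ B := by
  obtain ⟨ι, _, c, d, hd, -, hc, hf, hv⟩ := h
  have hcount (i : ι) : |∑ n ∈ Ioc a b with n ≡ r [MOD q], (if d i ∣ n then (1 : ℝ) else 0)
      - ((b : ℝ) - a) / q / d i| ≤ 1 := by
    have hcop := coprime_of_mem_factoredNumbers (hd i) hq.ne' hPq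
    obtain ⟨k, hk0, hkr⟩ := Nat.chineseRemainder hcop 0 r
    have hclass : {n ∈ Ioc a b | n ≡ r [MOD q] ∧ d i ∣ n} =
        {n ∈ Ioc a b | n ≡ k [MOD d i * q]} := by
      refine filter_congr fun n _ => ?_
      rw [← Nat.modEq_and_modEq_iff_modEq_mul hcop, ← Nat.modEq_zero_iff_dvd, and_comm]
      exact and_congr ⟨fun h => h.trans hk0.symm, fun h => h.trans hk0⟩
        ⟨fun h => h.trans hkr.symm, fun h => h.trans hkr⟩
    rw [sum_boole, filter_filter, hclass, div_div, mul_comm (q : ℝ), ← Nat.cast_mul]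
    exact abs_card_Ioc_filter_modEq_sub_le k (Nat.mul_pos (Nat.pos_of_ne_zero (hd i).1) hq) hab
  have hsum : ∑ n ∈ Ioc a b with n ≡ r [MOD q], f n - ((b : ℝ) - a) / q * v =
      ∑ i, c i * (∑ n ∈ Ioc a b with n ≡ r [MOD q], (if d i ∣ n then (1 : ℝ) else 0)
        - ((b : ℝ) - a) / q / d i) := by
    simp only [mul_sub, sum_sub_distrib, hf, hv, mul_sum]
    rw [sum_comm]
    congr 1
    exact sum_congr rfl fun i _ => by ring
  rw [hsum]
  calc _ ≤ ∑ i, |c i| := (abs_sum_le_sum_abs _ _).trans <| sum_le_sum fun i _ => by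
        rw [abs_mul]
        exact mul_le_of_le_one_right (abs_nonneg _) (hcount i)
    _ ≤ B := hc

theorem abs_sum_Ioc_sub_le (h : IsDivisorSum P D B f v) (X : ℕ) :
    |∑ n ∈ Ioc 0 X, f n - X * v| ≤ B := by
  have h1 := h.abs_sum_Ioc_filter_modEq_sub_le one_pos (by simp) X.zero_le 0
  simpa [Nat.modEq_one] using h1

theorem density_nonneg (h : IsDivisorSum P D B f v) (hf : ∀ n, 0 ≤ f n) : 0 ≤ v := by
  by_contra! hv
  obtain ⟨X, hX⟩ := exists_nat_gt (B / -v)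
  rw [div_lt_iff₀ (neg_pos.2 hv)] at hX
  have hsum := (abs_le.1 (h.abs_sum_Ioc_sub_le X)).2
  have : 0 ≤ ∑ n ∈ Ioc 0 X, f n := sum_nonneg fun n _ => hf n
  linarith

theorem density_mono (h : IsDivisorSum P D B f v) (h' : IsDivisorSum P D' B' g v')
    (hfg : ∀ n, f n ≤ g n) : v ≤ v' := by
  have hdiff := (h'.mono subset_rfl (le_max_left D' D) le_rfl).add
    ((h.mono subset_rfl (le_max_right D' D) le_rfl).const_mul (-1))
  linarith [hdiff.density_nonneg fun n => by linarith [hfg n]]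

theorem choose_card_filter_dvd (hP : ∀ p ∈ P, p.Prime) {z : ℝ} (hPz : ∀ p ∈ P, (p : ℝ) ≤ z)
    (k : ℕ) :
    IsDivisorSum P (z ^ k) ((#P).choose k) (fun n => (#{p ∈ P | p ∣ n}).choose k)
      (∑ S ∈ powersetCard k P, ∏ p ∈ S, 1 / (p : ℝ)) := by
  have hS (S : powersetCard k P) : S.1 ⊆ P ∧ #S.1 = k := mem_powersetCard.1 S.2
  have hprime (S : powersetCard k P) (p : ℕ) (hp : p ∈ S.1) : p.Prime := hP p ((hS S).1 hp)
  refine ⟨powersetCard k P, inferInstance, fun _ => 1, fun S => ∏ p ∈ S.1, p, fun S => ?_,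
    fun S => ?_, by simp, fun n => ?_, ?_⟩
  · rw [Nat.mem_factoredNumbers_iff_primeFactors_subset, Nat.primeFactors_prod (hprime S)]
    exact ⟨prod_ne_zero_iff.2 fun p hp => (hprime S p hp).ne_zero, (hS S).1⟩
  · rw [Nat.cast_prod]
    calc ∏ p ∈ S.1, (p : ℝ) ≤ ∏ _p ∈ S.1, z :=
          prod_le_prod (fun p _ => p.cast_nonneg) fun p hp => hPz p ((hS S).1 hp)
      _ = z ^ k := by rw [prod_const, (hS S).2]
  · have hdvd (S : powersetCard k P) : ∏ p ∈ S.1, p ∣ n ↔ ∀ p ∈ S.1, p ∣ n :=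
      ⟨fun h p hp => (dvd_prod_of_mem _ hp).trans h,
        prod_primes_dvd n fun p hp => (hprime S p hp).prime⟩
    have hfilter : powersetCard k {p ∈ P | p ∣ n} = {S ∈ powersetCard k P | ∀ p ∈ S, p ∣ n} := by
      ext S
      simp only [mem_powersetCard, mem_filter, subset_iff]
      grind
    simp only [one_mul, hdvd]
    rw [sum_coe_sort (powersetCard k P) (fun S => if ∀ p ∈ S, p ∣ n then (1 : ℝ) else 0),
      sum_boole, ← hfilter, card_powersetCard]
  · rw [← sum_coe_sort]
    simp [one_div, Nat.cast_prod]

end IsDivisorSum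

open Classical in
/-- The indicator function of the integers divisible by no element of `P`. -/
noncomputable def sifted (P : Finset ℕ) (n : ℕ) : ℝ := if ∀ p ∈ P, ¬ p ∣ n then 1 else 0

/-- The density `∏ (1 - 1 / p)` of the integers divisible by no prime of `P`. -/
noncomputable def siftedDensity (P : Finset ℕ) : ℝ := ∏ p ∈ P, (1 - 1 / (p : ℝ))

section Sifted

variable {P Q : Finset ℕ}

theorem sifted_eq_ite_card (P : Finset ℕ) (n : ℕ) :
    sifted P n = if #{p ∈ P | p ∣ n} = 0 then 1 else 0 := by
  simp only [sifted, card_eq_zero, filter_eq_empty_iff]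

theorem sifted_nonneg (P : Finset ℕ) (n : ℕ) : 0 ≤ sifted P n := by
  unfold sifted; split_ifs <;> norm_num

theorem sifted_le_one (P : Finset ℕ) (n : ℕ) : sifted P n ≤ 1 := by
  unfold sifted; split_ifs <;> norm_num

theorem sifted_empty (n : ℕ) : sifted ∅ n = 1 := by simp [sifted]

theorem sifted_union (P Q : Finset ℕ) (n : ℕ) : sifted (P ∪ Q) n = sifted P n * sifted Q n := by
  simp only [sifted, mem_union, or_imp, forall_and, ite_and, ite_mul, one_mul, zero_mul]

theorem sifted_antitone (hPQ : P ⊆ Q) (n : ℕ) : sifted Q n ≤ sifted P n := by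
  rw [← union_eq_right.2 hPQ, sifted_union]
  exact mul_le_of_le_one_right (sifted_nonneg P n) (sifted_le_one Q n)

theorem siftedDensity_empty : siftedDensity ∅ = 1 := prod_empty

theorem siftedDensity_union (hPQ : Disjoint P Q) :
    siftedDensity (P ∪ Q) = siftedDensity P * siftedDensity Q := prod_union hPQ

theorem siftedDensity_pos (hP : ∀ p ∈ P, p.Prime) : 0 < siftedDensity P :=
  prod_pos fun p hp => sub_pos.2 <| by
    rw [one_div]
    exact inv_lt_one_of_one_lt₀ (by exact_mod_cast (hP p hp).one_lt)

theorem siftedDensity_eq_sum_powerset (P : Finset ℕ) :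
    siftedDensity P = ∑ S ∈ P.powerset, (-1) ^ #S * ∏ p ∈ S, 1 / (p : ℝ) := by
  simp only [siftedDensity, sub_eq_add_neg, prod_one_add, prod_neg]

theorem isDivisorSum_sifted (hP : ∀ p ∈ P, p.Prime) {z : ℝ} (hz : 1 ≤ z)
    (hPz : ∀ p ∈ P, (p : ℝ) ≤ z) :
    IsDivisorSum P (z ^ #P) (2 ^ #P) (sifted P) (siftedDensity P) := by
  have h := IsDivisorSum.sum (range (#P + 1)) fun k hk =>
    ((IsDivisorSum.choose_card_filter_dvd hP hPz k).mono subset_rfl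
      (pow_le_pow_right₀ hz (Nat.lt_succ_iff.1 (mem_range.1 hk))) le_rfl).const_mul ((-1) ^ k)
  convert h using 1
  · simp only [abs_pow, abs_neg, abs_one, one_pow, one_mul]
    exact_mod_cast (Nat.sum_range_choose _).symm
  · ext n
    have hle : #{p ∈ P | p ∣ n} ≤ #P := card_filter_le _ _
    rw [sifted_eq_ite_card, ← sum_subset (range_mono (Nat.succ_le_succ hle))]
    · exact_mod_cast (Int.alternating_sum_range_choose (n := #{p ∈ P | p ∣ n})).symm
    · intro k _ hk
      rw [Nat.choose_eq_zero_of_lt (by simpa using hk), Nat.cast_zero, mul_zero]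
  · rw [siftedDensity_eq_sum_powerset, sum_powerset]
    refine sum_congr rfl fun k _ => ?_
    rw [mul_sum]
    exact sum_congr rfl fun S hS => by rw [(mem_powersetCard.1 hS).2]

end Sifted

section Bonferroni

theorem sum_range_choose_le_pow (t k : ℕ) : ∑ i ∈ range (k + 1), t.choose i ≤ (t + 1) ^ k := by
  induction k with
  | zero => simp
  | succ k ih =>
    rw [sum_range_succ]
    calc ∑ i ∈ range (k + 1), t.choose i + t.choose (k + 1)
        ≤ (t + 1) ^ k + (t + 1) ^ k * t := by
          gcongr
          calc t.choose (k + 1) ≤ t ^ k * t := pow_succ t k ▸ Nat.choose_le_pow t (k + 1)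
            _ ≤ (t + 1) ^ k * t := by gcongr; exact t.le_succ
      _ = (t + 1) ^ (k + 1) := by ring

theorem alternating_sum_range_choose_succ (n b : ℕ) :
    ∑ i ∈ range (2 * b + 1), (-1 : ℝ) ^ i * ((n + 1).choose i : ℝ) = n.choose (2 * b) := by
  have h := Int.alternating_sum_range_choose_eq_choose (n := n) (m := 2 * b)
  rw [pow_mul, neg_one_sq, one_pow, one_mul] at h
  exact_mod_cast h

theorem ite_eq_zero_le_alternating_sum_choose (ν b : ℕ) :
    (if ν = 0 then (1 : ℝ) else 0) ≤ ∑ i ∈ range (2 * b + 1), (-1 : ℝ) ^ i * (ν.choose i : ℝ) := by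
  cases ν with
  | zero => simp [sum_range_succ']
  | succ n => simp [alternating_sum_range_choose_succ]

theorem alternating_sum_choose_le (ν b : ℕ) :
    ∑ i ∈ range (2 * b + 1), (-1 : ℝ) ^ i * (ν.choose i : ℝ) ≤
      (if ν = 0 then 1 else 0) + ν.choose (2 * b + 1) := by
  cases ν with
  | zero => simp [sum_range_succ']
  | succ n =>
    rw [alternating_sum_range_choose_succ, if_neg n.succ_ne_zero, zero_add, Nat.choose_succ_succ]
    exact_mod_cast Nat.le_add_right _ _

end Bonferroni

theorem exp_neg_two_mul_le_one_sub {t : ℝ} (h0 : 0 ≤ t) (h1 : t ≤ 1 / 2) :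
    Real.exp (-(2 * t)) ≤ 1 - t := by
  have h2 : 2 * t + 1 ≤ Real.exp (2 * t) := Real.add_one_le_exp _
  rw [Real.exp_neg, inv_le_iff_one_le_mul₀' (Real.exp_pos _)]
  nlinarith

section Block

variable {P : Finset ℕ} {L : ℝ}

theorem exp_neg_le_siftedDensity (hP : ∀ p ∈ P, p.Prime) (hL : ∑ p ∈ P, 1 / (p : ℝ) ≤ L) :
    Real.exp (-(2 * L)) ≤ siftedDensity P :=
  calc Real.exp (-(2 * L)) ≤ Real.exp (∑ p ∈ P, -(2 * (1 / (p : ℝ)))) := by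
        rw [sum_neg_distrib, ← mul_sum]
        gcongr
    _ = ∏ p ∈ P, Real.exp (-(2 * (1 / (p : ℝ)))) := Real.exp_sum _ _
    _ ≤ siftedDensity P := prod_le_prod (fun p _ => (Real.exp_pos _).le) fun p hp =>
        exp_neg_two_mul_le_one_sub (by positivity) (by
          gcongr
          exact_mod_cast (hP p hp).two_le)

/-- Rankin's trick: weight each subset `S` by `2 ^ #S`. -/
theorem sum_powersetCard_prod_le (hL : ∑ p ∈ P, 1 / (p : ℝ) ≤ L) (k : ℕ) :
    ∑ S ∈ powersetCard k P, ∏ p ∈ S, 1 / (p : ℝ) ≤ Real.exp (2 * L) * (1 / 2) ^ k := by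
  have hnonneg (S : Finset ℕ) : 0 ≤ ∏ p ∈ S, 2 * (1 / (p : ℝ)) :=
    prod_nonneg fun p _ => by positivity
  have hRankin : 2 ^ k * ∑ S ∈ powersetCard k P, ∏ p ∈ S, 1 / (p : ℝ) ≤ Real.exp (2 * L) :=
    calc 2 ^ k * ∑ S ∈ powersetCard k P, ∏ p ∈ S, 1 / (p : ℝ)
        = ∑ S ∈ powersetCard k P, ∏ p ∈ S, 2 * (1 / (p : ℝ)) := by
          rw [mul_sum]
          refine sum_congr rfl fun S hS => ?_
          rw [prod_mul_distrib, prod_const, (mem_powersetCard.1 hS).2]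
      _ ≤ ∑ S ∈ P.powerset, ∏ p ∈ S, 2 * (1 / (p : ℝ)) :=
          sum_le_sum_of_subset_of_nonneg
            (fun S hS => mem_powerset.2 (mem_powersetCard.1 hS).1) fun S _ _ => hnonneg S
      _ = ∏ p ∈ P, (1 + 2 * (1 / (p : ℝ))) := (prod_one_add _).symm
      _ ≤ ∏ p ∈ P, Real.exp (2 * (1 / (p : ℝ))) :=
          prod_le_prod (fun p _ => by positivity) fun p _ => by
            rw [add_comm]
            exact Real.add_one_le_exp _
      _ = Real.exp (2 * ∑ p ∈ P, 1 / (p : ℝ)) := by rw [← Real.exp_sum, mul_sum]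
      _ ≤ Real.exp (2 * L) := by gcongr
  rw [one_div, inv_pow, ← div_eq_mul_inv, le_div_iff₀' (by positivity)]
  exact hRankin

theorem sum_powersetCard_prod_le_mul_siftedDensity (hP : ∀ p ∈ P, p.Prime)
    (hL : ∑ p ∈ P, 1 / (p : ℝ) ≤ L) (b : ℕ) :
    ∑ S ∈ powersetCard (2 * b + 1) P, ∏ p ∈ S, 1 / (p : ℝ) ≤
      Real.exp (4 * L) * (1 / 4) ^ b * siftedDensity P :=
  calc _ ≤ Real.exp (2 * L) * (1 / 2) ^ (2 * b + 1) := sum_powersetCard_prod_le hL _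
    _ ≤ Real.exp (2 * L) * (1 / 4) ^ b := by
        rw [pow_succ, pow_mul]
        norm_num
        nlinarith [Real.exp_pos (2 * L), show (0 : ℝ) < (1 / 4) ^ b by positivity]
    _ = Real.exp (4 * L) * (1 / 4) ^ b * Real.exp (-(2 * L)) := by
        rw [mul_right_comm, ← Real.exp_add]
        ring_nf
    _ ≤ Real.exp (4 * L) * (1 / 4) ^ b * siftedDensity P := by
        gcongr
        exact exp_neg_le_siftedDensity hP hL

end Block

/-- An upper bound sieve for `P` of level `D`: a divisor sum `w` majorising `sifted P`, together
with a divisor sum `e` bounding the excess `w - sifted P`, whose coefficients have absolute sum at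
most `B`. The parameter `x` controls their densities `vw` and `ve` relative to `siftedDensity P`, in
a form that is additive in `x` when the sieves of disjoint sets are multiplied. -/
structure UpperSieve (P : Finset ℕ) (D B x : ℝ) where
  w : ℕ → ℝ
  e : ℕ → ℝ
  vw : ℝ
  ve : ℝ
  isDivisorSum_w : IsDivisorSum P D D w vw
  isDivisorSum_e : IsDivisorSum P D B e ve
  sifted_le_w (n : ℕ) : sifted P n ≤ w n
  w_le (n : ℕ) : w n ≤ sifted P n + e n
  vw_le : vw ≤ Real.exp x * siftedDensity P
  ve_le : ve ≤ x * Real.exp x * siftedDensity P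

namespace UpperSieve

variable {P P₁ P₂ : Finset ℕ} {D D₁ D₂ B B₁ B₂ x x₁ x₂ : ℝ}

theorem w_nonneg (s : UpperSieve P D B x) (n : ℕ) : 0 ≤ s.w n :=
  (sifted_nonneg P n).trans (s.sifted_le_w n)

theorem e_nonneg (s : UpperSieve P D B x) (n : ℕ) : 0 ≤ s.e n := by
  linarith [s.sifted_le_w n, s.w_le n]

/-- The empty sieve. -/
def empty (hD : 1 ≤ D) (hB : 0 ≤ B) (hx : 0 ≤ x) : UpperSieve ∅ D B x where
  w _ := 1
  e _ := 0
  vw := 1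
  ve := 0
  isDivisorSum_w := (IsDivisorSum.one hD).mono subset_rfl le_rfl hD
  isDivisorSum_e := IsDivisorSum.zero.mono subset_rfl le_rfl hB
  sifted_le_w n := sifted_le_one ∅ n
  w_le n := by rw [sifted_empty, add_zero]
  vw_le := by rw [siftedDensity_empty, mul_one]; exact Real.one_le_exp hx
  ve_le := by rw [siftedDensity_empty]; positivity

/-- The sieve with larger parameters. -/
def mono (s : UpperSieve P D₁ B₁ x₁) (hP : ∀ p ∈ P, p.Prime) (hD : D₁ ≤ D₂) (hB : B₁ ≤ B₂)
    (hx₁ : 0 ≤ x₁) (hx : x₁ ≤ x₂) : UpperSieve P D₂ B₂ x₂ where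
  w := s.w
  e := s.e
  vw := s.vw
  ve := s.ve
  isDivisorSum_w := s.isDivisorSum_w.mono subset_rfl hD hD
  isDivisorSum_e := s.isDivisorSum_e.mono subset_rfl hD hB
  sifted_le_w := s.sifted_le_w
  w_le := s.w_le
  vw_le := s.vw_le.trans (by have := (siftedDensity_pos hP).le; gcongr)
  ve_le := s.ve_le.trans (by
    have := (siftedDensity_pos hP).le
    have := hx₁.trans hx
    gcongr)

/-- The product of the sieves of two disjoint sets. -/
def mul (s₁ : UpperSieve P₁ D₁ B₁ x₁) (s₂ : UpperSieve P₂ D₂ B₂ x₂) (hP : Disjoint P₁ P₂) :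
    UpperSieve (P₁ ∪ P₂) (D₁ * D₂) (B₁ * D₂ + D₁ * B₂) (x₁ + x₂) where
  w n := s₁.w n * s₂.w n
  e n := s₁.e n * s₂.w n + s₁.w n * s₂.e n
  vw := s₁.vw * s₂.vw
  ve := s₁.ve * s₂.vw + s₁.vw * s₂.ve
  isDivisorSum_w := s₁.isDivisorSum_w.mul s₂.isDivisorSum_w hP
  isDivisorSum_e := (s₁.isDivisorSum_e.mul s₂.isDivisorSum_w hP).add
    (s₁.isDivisorSum_w.mul s₂.isDivisorSum_e hP)
  sifted_le_w n := by
    rw [sifted_union]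
    exact mul_le_mul (s₁.sifted_le_w n) (s₂.sifted_le_w n) (sifted_nonneg _ _) (s₁.w_nonneg n)
  w_le n := by
    rw [sifted_union]
    nlinarith [mul_le_mul_of_nonneg_right (s₁.w_le n) (s₂.w_nonneg n),
      mul_le_mul_of_nonneg_left (s₂.w_le n) (sifted_nonneg P₁ n),
      mul_le_mul_of_nonneg_right (s₁.sifted_le_w n) (s₂.e_nonneg n)]
  vw_le := by
    have hv₁ := s₁.isDivisorSum_w.density_nonneg s₁.w_nonneg
    have hv₂ := s₂.isDivisorSum_w.density_nonneg s₂.w_nonneg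
    rw [siftedDensity_union hP, Real.exp_add, mul_mul_mul_comm]
    exact mul_le_mul s₁.vw_le s₂.vw_le hv₂ (hv₁.trans s₁.vw_le)
  ve_le := by
    have hv₁ := s₁.isDivisorSum_w.density_nonneg s₁.w_nonneg
    have hv₂ := s₂.isDivisorSum_w.density_nonneg s₂.w_nonneg
    have he₁ := s₁.isDivisorSum_e.density_nonneg s₁.e_nonneg
    have he₂ := s₂.isDivisorSum_e.density_nonneg s₂.e_nonneg
    calc s₁.ve * s₂.vw + s₁.vw * s₂.ve
        ≤ x₁ * Real.exp x₁ * siftedDensity P₁ * (Real.exp x₂ * siftedDensity P₂) +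
          Real.exp x₁ * siftedDensity P₁ * (x₂ * Real.exp x₂ * siftedDensity P₂) :=
          add_le_add (mul_le_mul s₁.ve_le s₂.vw_le hv₂ (he₁.trans s₁.ve_le))
            (mul_le_mul s₁.vw_le s₂.ve_le he₂ (hv₁.trans s₁.vw_le))
      _ = (x₁ + x₂) * Real.exp (x₁ + x₂) * siftedDensity (P₁ ∪ P₂) := by
          rw [siftedDensity_union hP, Real.exp_add]
          ring

/-- The Brun sieve truncated at `2 * b` prime factors, by the Bonferroni inequalities. -/
theorem nonempty_of_sum_one_div_le (hP : ∀ p ∈ P, p.Prime) {z : ℝ} (hz : 1 ≤ z)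
    (hPz : ∀ p ∈ P, (p : ℝ) ≤ z) (hcard : (#P : ℝ) + 1 ≤ z) {L : ℝ}
    (hL : ∑ p ∈ P, 1 / (p : ℝ) ≤ L) (b : ℕ) :
    Nonempty (UpperSieve P (z ^ (2 * b + 1)) (z ^ (2 * b + 1))
      (Real.exp (4 * L) * (1 / 4) ^ b)) := by
  set x := Real.exp (4 * L) * (1 / 4) ^ b
  have hx0 : 0 ≤ x := by positivity
  have hlayer (k : ℕ) := IsDivisorSum.choose_card_filter_dvd hP hPz k
  have hw := IsDivisorSum.sum (range (2 * b + 1)) fun k hk => ((hlayer k).mono subset_rfl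
    (pow_le_pow_right₀ hz (mem_range.1 hk).le) le_rfl).const_mul ((-1) ^ k)
  have he := hlayer (2 * b + 1)
  have hwD : ∑ k ∈ range (2 * b + 1), |(-1 : ℝ) ^ k| * ((#P).choose k : ℝ) ≤ z ^ (2 * b + 1) := by
    simp only [abs_pow, abs_neg, abs_one, one_pow, one_mul]
    calc ∑ k ∈ range (2 * b + 1), ((#P).choose k : ℝ) ≤ ((#P : ℝ) + 1) ^ (2 * b) := by
          exact_mod_cast sum_range_choose_le_pow (#P) (2 * b)
      _ ≤ z ^ (2 * b) := by gcongr
      _ ≤ z ^ (2 * b + 1) := pow_le_pow_right₀ hz (Nat.le_succ _)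
  have heD : ((#P).choose (2 * b + 1) : ℝ) ≤ z ^ (2 * b + 1) :=
    calc ((#P).choose (2 * b + 1) : ℝ) ≤ (#P : ℝ) ^ (2 * b + 1) := by
          exact_mod_cast Nat.choose_le_pow _ _
      _ ≤ z ^ (2 * b + 1) := by gcongr; linarith
  have hve : ∑ S ∈ powersetCard (2 * b + 1) P, ∏ p ∈ S, 1 / (p : ℝ) ≤ x * siftedDensity P :=
    sum_powersetCard_prod_le_mul_siftedDensity hP hL b
  have hlegendre := isDivisorSum_sifted hP hz hPz
  have hw_le (n : ℕ) := alternating_sum_choose_le #{p ∈ P | p ∣ n} b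
  simp only [← sifted_eq_ite_card] at hw_le
  have hV := (siftedDensity_pos hP).le
  refine ⟨⟨_, _, _, _, hw.mono subset_rfl le_rfl hwD, he.mono subset_rfl le_rfl heD,
    fun n => ?_, hw_le, ?_, ?_⟩⟩
  · rw [sifted_eq_ite_card]
    exact ite_eq_zero_le_alternating_sum_choose _ b
  · have := hw.density_mono
      ((hlegendre.mono subset_rfl (le_max_left _ (z ^ (2 * b + 1))) le_rfl).add
        (he.mono subset_rfl (le_max_right _ _) le_rfl)) hw_le
    calc _ ≤ siftedDensity P + x * siftedDensity P := by linarith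
      _ ≤ Real.exp x * siftedDensity P := by nlinarith [Real.add_one_le_exp x]
  · refine hve.trans ?_
    gcongr
    exact le_mul_of_one_le_right hx0 (Real.one_le_exp hx0)

end UpperSieve

section Mertens

variable {P : Finset ℕ} {x y z : ℝ}

theorem sum_one_div_prime_le_of_mem_dyadic (hy : 1 < y) (hyx : y ≤ x)
    (hP : ∀ p ∈ P, p.Prime ∧ x ≤ p ∧ (p : ℝ) < 2 * x) :
    ∑ p ∈ P, 1 / (p : ℝ) ≤ 2 * Real.log 4 / Real.log y := by
  have hlog : 0 < Real.log y := Real.log_pos hy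
  have hx : 0 < x := by linarith
  have hterm (p : ℕ) (hp : p ∈ P) : 1 / (p : ℝ) ≤ Real.log p * (1 / (x * Real.log y)) := by
    obtain ⟨-, hxp, -⟩ := hP p hp
    have hlogp : Real.log y ≤ Real.log p := Real.log_le_log (by linarith) (hyx.trans hxp)
    rw [mul_one_div, div_le_div_iff₀ (hx.trans_le hxp) (by positivity), one_mul, mul_comm x]
    exact mul_le_mul hlogp hxp hx.le (hlog.le.trans hlogp)
  have htheta : ∑ p ∈ P, Real.log p ≤ Chebyshev.theta (2 * x) :=
    sum_le_sum_of_subset_of_nonneg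
      (fun p hp => mem_filter.2 ⟨mem_Ioc.2 ⟨(hP p hp).1.pos, Nat.le_floor (hP p hp).2.2.le⟩,
        (hP p hp).1⟩) fun p _ _ => Real.log_natCast_nonneg p
  calc ∑ p ∈ P, 1 / (p : ℝ) ≤ (∑ p ∈ P, Real.log p) * (1 / (x * Real.log y)) := by
        rw [sum_mul]
        exact sum_le_sum hterm
    _ ≤ Real.log 4 * (2 * x) * (1 / (x * Real.log y)) := by
        gcongr
        exact htheta.trans (Chebyshev.theta_le_log4_mul_x (by linarith))
    _ = 2 * Real.log 4 / Real.log y := by field_simp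

theorem sum_one_div_prime_le_of_lt_mul_two_pow (hy : 1 < y) (k : ℕ) (P : Finset ℕ)
    (hP : ∀ p ∈ P, p.Prime ∧ y ≤ p ∧ (p : ℝ) < y * 2 ^ k) :
    ∑ p ∈ P, 1 / (p : ℝ) ≤ k * (2 * Real.log 4 / Real.log y) := by
  induction k generalizing P with
  | zero =>
    have hempty : P = ∅ := eq_empty_of_forall_notMem fun p hp => by
      obtain ⟨-, hyp, hpy⟩ := hP p hp
      linarith
    simp [hempty]
  | succ k ih =>
    have hlow := ih {p ∈ P | (p : ℝ) < y * 2 ^ k} fun p hp => by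
      rw [mem_filter] at hp
      exact ⟨(hP p hp.1).1, (hP p hp.1).2.1, hp.2⟩
    have hhigh := sum_one_div_prime_le_of_mem_dyadic (P := {p ∈ P | ¬ (p : ℝ) < y * 2 ^ k}) hy
      (le_mul_of_one_le_right (by linarith) (one_le_pow₀ one_le_two)) fun p hp => by
        rw [mem_filter, not_lt] at hp
        refine ⟨(hP p hp.1).1, hp.2, (hP p hp.1).2.2.trans_eq ?_⟩
        ring
    rw [← sum_filter_add_sum_filter_not P (fun p : ℕ => (p : ℝ) < y * 2 ^ k), Nat.cast_succ,
      add_one_mul]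
    exact add_le_add hlow hhigh

theorem sum_one_div_prime_le_of_sqrt_le (hz : 1 ≤ z)
    (hP : ∀ p ∈ P, p.Prime ∧ √z ≤ p ∧ (p : ℝ) < z) : ∑ p ∈ P, 1 / (p : ℝ) ≤ 8 := by
  have hsq : √z * √z = z := Real.mul_self_sqrt (by linarith)
  rcases le_or_gt 2 √z with h | h
  · have hlog2 : 0 < Real.log 2 := Real.log_pos one_lt_two
    have hlog : Real.log 2 ≤ Real.log √z := Real.log_le_log two_pos h
    have hlog4 : Real.log 4 = 2 * Real.log 2 := by
      rw [show (4 : ℝ) = 2 ^ 2 by norm_num, Real.log_pow, Nat.cast_ofNat]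
    set k := ⌈Real.log √z / Real.log 2⌉₊
    have hlek : Real.log √z ≤ k * Real.log 2 := (div_le_iff₀ hlog2).1 (Nat.le_ceil _)
    have hklt : (k - 1) * Real.log 2 < Real.log √z := by
      rw [← lt_div_iff₀ hlog2, sub_lt_iff_lt_add]
      exact Nat.ceil_lt_add_one (div_nonneg (hlog2.le.trans hlog) hlog2.le)
    have hpow : √z ≤ 2 ^ k := by
      rwa [← Real.log_le_log_iff (by linarith) (by positivity), Real.log_pow]
    refine (sum_one_div_prime_le_of_lt_mul_two_pow (y := √z) (by linarith) k P
      fun p hp => ?_).trans ?_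
    · refine ⟨(hP p hp).1, (hP p hp).2.1, (hP p hp).2.2.trans_le ?_⟩
      nlinarith
    · rw [hlog4, mul_div_assoc', div_le_iff₀ (by linarith)]
      linarith
  · have hz4 : z < 4 := by nlinarith [Real.sqrt_nonneg z]
    have hsub : P ⊆ {2, 3} := fun p hp => by
      obtain ⟨hprime, -, hpz⟩ := hP p hp
      have hp4 : p < 4 := by exact_mod_cast hpz.trans hz4
      have := hprime.two_le
      simp only [mem_insert, mem_singleton]
      omega
    refine (sum_le_sum_of_subset_of_nonneg hsub fun p _ _ => by positivity).trans ?_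
    norm_num

theorem card_add_one_le_of_forall_prime_lt (hz : 1 ≤ z)
    (hP : ∀ p ∈ P, p.Prime ∧ (p : ℝ) < z) : (#P : ℝ) + 1 ≤ z := by
  have hsub : P ⊆ Ioo 1 ⌈z⌉₊ := fun p hp =>
    mem_Ioo.2 ⟨(hP p hp).1.one_lt, Nat.lt_ceil.2 (hP p hp).2⟩
  have hcard := card_le_card hsub
  rw [Nat.card_Ioo] at hcard
  rcases (#P).eq_zero_or_pos with h0 | h0
  · simpa [h0] using hz
  · have hceil : (⌈z⌉₊ : ℝ) < z + 1 := Nat.ceil_lt_add_one (by linarith)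
    have : ((#P + 2 : ℕ) : ℝ) ≤ ⌈z⌉₊ := by exact_mod_cast (by omega : #P + 2 ≤ ⌈z⌉₊)
    push_cast at this
    linarith

end Mertens

namespace UpperSieve

/-- The Brun–Hooley sieve: primes in `[√z, z)` are sieved with parameter `b`, and the smaller ones
recursively with parameter `b + 1`, so that the losses form a geometric series. -/
theorem nonempty_of_le_two_pow (J b : ℕ) {z : ℝ} (hz : 1 ≤ z) (hzJ : z ≤ 2 ^ 2 ^ J) {P : Finset ℕ}
    (hP : ∀ p ∈ P, p.Prime ∧ (p : ℝ) < z) :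
    Nonempty (UpperSieve P (z ^ (4 * b + 6)) (J * z ^ (4 * b + 6))
      (4 / 3 * (Real.exp (4 * 8) * (1 / 4) ^ b))) := by
  induction J generalizing b z P with
  | zero =>
    obtain rfl : P = ∅ := eq_empty_of_forall_notMem fun p hp => by
      have h2 : (2 : ℝ) ≤ p := by exact_mod_cast (hP p hp).1.two_le
      have := (hP p hp).2
      norm_num at hzJ
      linarith
    exact ⟨empty (one_le_pow₀ hz) (by simp) (by positivity)⟩
  | succ J ih =>
    have hs1 : 1 ≤ √z := Real.one_le_sqrt.2 hz
    have hsJ : √z ≤ 2 ^ 2 ^ J := by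
      rw [pow_succ, pow_mul] at hzJ
      exact Real.sqrt_le_iff.2 ⟨by positivity, hzJ⟩
    have hsmall (p : ℕ) (hp : p ∈ ({p ∈ P | (p : ℝ) < √z} : Finset ℕ)) :
        p.Prime ∧ (p : ℝ) < √z := by
      rw [mem_filter] at hp
      exact ⟨(hP p hp.1).1, hp.2⟩
    have hlarge (p : ℕ) (hp : p ∈ ({p ∈ P | ¬ (p : ℝ) < √z} : Finset ℕ)) :
        p.Prime ∧ √z ≤ p ∧ (p : ℝ) < z := by
      rw [mem_filter, not_lt] at hp
      exact ⟨(hP p hp.1).1, hp.2, (hP p hp.1).2⟩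
    obtain ⟨s₁⟩ := ih (b + 1) hs1 hsJ hsmall
    obtain ⟨s₂⟩ := nonempty_of_sum_one_div_le (fun p hp => (hlarge p hp).1) hz
      (fun p hp => (hlarge p hp).2.2.le)
      (card_add_one_le_of_forall_prime_lt hz fun p hp => ⟨(hlarge p hp).1, (hlarge p hp).2.2⟩)
      (sum_one_div_prime_le_of_sqrt_le hz hlarge) b
    have s := s₁.mul s₂ (disjoint_filter_filter_not _ _ _)
    have hpow : √z ^ (4 * (b + 1) + 6) * z ^ (2 * b + 1) = z ^ (4 * b + 6) := by
      rw [show 4 * (b + 1) + 6 = 2 * (2 * b + 5) by ring, pow_mul, Real.sq_sqrt (by linarith),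
        ← pow_add]
      congr 1
      ring
    rw [filter_union_filter_not_eq, mul_assoc (J : ℝ), hpow, ← add_one_mul, ← Nat.cast_succ] at s
    convert Nonempty.intro s using 2
    ring

end UpperSieve

/-- The fundamental lemma of the sieve, with constants independent of the sifting range. -/
theorem exists_upperSieve :
    ∃ K : ℝ, 1 ≤ K ∧ ∀ (b : ℕ) (z : ℝ) (P : Finset ℕ), 2 ≤ z →
      (∀ p ∈ P, p.Prime ∧ (p : ℝ) < z) →
      ∃ (x : ℝ) (s : UpperSieve P (z ^ (4 * b + 8)) (z ^ (4 * b + 8)) x),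
        s.vw ≤ K * siftedDensity P ∧ s.ve ≤ K * (1 / 4) ^ b * siftedDensity P := by
  set a : ℝ := 4 / 3 * Real.exp (4 * 8) with ha
  have ha0 : 0 ≤ a := by positivity
  refine ⟨(1 + a) * Real.exp a, one_le_mul_of_one_le_of_one_le (by linarith) (Real.one_le_exp ha0),
    fun b z P hz hP => ?_⟩
  have hzJ : z ≤ 2 ^ 2 ^ ⌈z⌉₊ := (Nat.le_ceil z).trans <| by
    exact_mod_cast (Nat.lt_two_pow_self.trans Nat.lt_two_pow_self).le
  obtain ⟨s⟩ := UpperSieve.nonempty_of_le_two_pow ⌈z⌉₊ b (by linarith) hzJ hP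
  have hD : z ^ (4 * b + 6) ≤ z ^ (4 * b + 8) := pow_le_pow_right₀ (by linarith) (by omega)
  have hB : ⌈z⌉₊ * z ^ (4 * b + 6) ≤ z ^ (4 * b + 8) := by
    have hceil : (⌈z⌉₊ : ℝ) < z + 1 := Nat.ceil_lt_add_one (by linarith)
    rw [show z ^ (4 * b + 8) = z ^ 2 * z ^ (4 * b + 6) by ring]
    gcongr
    nlinarith
  have hx : 4 / 3 * (Real.exp (4 * 8) * (1 / 4) ^ b) = a * (1 / 4) ^ b := by rw [ha]; ring
  have hexp : Real.exp (a * (1 / 4) ^ b) ≤ Real.exp a :=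
    Real.exp_le_exp.2 (mul_le_of_le_one_right ha0 (pow_le_one₀ (by norm_num) (by norm_num)))
  have hV := (siftedDensity_pos fun p hp => (hP p hp).1).le
  rw [hx] at s
  refine ⟨_, s.mono (fun p hp => (hP p hp).1) hD hB (by positivity) le_rfl,
    s.vw_le.trans ?_, s.ve_le.trans ?_⟩
  · gcongr
    exact hexp.trans (le_mul_of_one_le_left (Real.exp_pos a).le (by linarith))
  · calc a * (1 / 4) ^ b * Real.exp (a * (1 / 4) ^ b) * siftedDensity P
        ≤ (1 + a) * (1 / 4) ^ b * Real.exp a * siftedDensity P := by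
          gcongr
          linarith
      _ = (1 + a) * Real.exp a * (1 / 4) ^ b * siftedDensity P := by ring

section PrimesBelow

variable {z : ℝ} {q : ℕ}

theorem mem_primesBelow_ceil {p : ℕ} : p ∈ Nat.primesBelow ⌈z⌉₊ ↔ p.Prime ∧ (p : ℝ) < z := by
  rw [Nat.mem_primesBelow, Nat.lt_ceil, and_comm]

theorem prime_of_mem_primesBelow_ceil {p : ℕ} (hp : p ∈ Nat.primesBelow ⌈z⌉₊) : p.Prime :=
  (mem_primesBelow_ceil.1 hp).1

/-- Euler's proof of the divergence of `∑ 1 / p`, made quantitative. -/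
theorem log_le_inv_siftedDensity_primesBelow (N : ℕ) :
    Real.log N ≤ (siftedDensity N.primesBelow)⁻¹ := by
  let f : ℕ →* ℝ :=
    { toFun := fun n => (n : ℝ)⁻¹, map_one' := by simp, map_mul' := fun a b => by simp [mul_comm] }
  have hf {p : ℕ} (hp : p.Prime) : ‖f p‖ < 1 := by
    change ‖(p : ℝ)⁻¹‖ < 1
    rw [norm_inv, Real.norm_natCast]
    exact inv_lt_one_of_one_lt₀ (by exact_mod_cast hp.one_lt)
  have hEuler := (EulerProduct.summable_and_hasSum_smoothNumbers_prod_primesBelow_geometric hf N).2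
  have hprod : ∏ p ∈ N.primesBelow, (1 - f p)⁻¹ = (siftedDensity N.primesBelow)⁻¹ := by
    simp only [siftedDensity, ← prod_inv_distrib, one_div]
    rfl
  let g : Fin (N - 1) ↪ N.smoothNumbers :=
    ⟨fun i => ⟨i + 1, Nat.mem_smoothNumbers_of_lt i.1.succ_pos (by omega)⟩, fun i j hij =>
      Fin.ext (Nat.succ_injective (congrArg Subtype.val hij))⟩
  have hsub := sum_le_hasSum (univ.map g) (fun i _ => inv_nonneg.2 (Nat.cast_nonneg _)) hEuler
  rw [sum_map, hprod] at hsub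
  have hharm := log_add_one_le_harmonic (N - 1)
  rw [harmonic, Rat.cast_sum, sum_range] at hharm
  rcases N.eq_zero_or_pos with rfl | hN
  · simp [siftedDensity]
  · rw [Nat.sub_add_cancel hN] at hharm
    refine hharm.trans (le_trans (le_of_eq (sum_congr rfl fun i _ => ?_)) hsub)
    rw [Rat.cast_inv, Rat.cast_natCast]
    rfl

theorem siftedDensity_primesBelow_mul_log_le (hz : 1 ≤ z) :
    siftedDensity (Nat.primesBelow ⌈z⌉₊) * Real.log z ≤ 1 := by
  have hV := siftedDensity_pos fun _ => prime_of_mem_primesBelow_ceil (z := z)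
  rw [← mul_inv_cancel₀ hV.ne']
  gcongr
  exact (Real.log_le_log (by linarith) (Nat.le_ceil z)).trans
    (log_le_inv_siftedDensity_primesBelow _)

theorem siftedDensity_primeFactors (q : ℕ) :
    (q.totient : ℝ) = q * siftedDensity q.primeFactors := by
  have h := congrArg (Rat.cast : ℚ → ℝ) (Nat.totient_eq_mul_prod_factors q)
  push_cast at h
  simpa only [siftedDensity, one_div] using h

theorem siftedDensity_primesBelow_filter_not_dvd_le (hz : 1 < z) (hq : 0 < q) :
    siftedDensity {p ∈ Nat.primesBelow ⌈z⌉₊ | ¬ p ∣ q} ≤ q / q.totient / Real.log z := by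
  set A := {p ∈ Nat.primesBelow ⌈z⌉₊ | p ∣ q}
  set A' := {p ∈ Nat.primesBelow ⌈z⌉₊ | ¬ p ∣ q}
  have hA : ∀ p ∈ A, p.Prime := fun p hp => prime_of_mem_primesBelow_ceil (mem_filter.1 hp).1
  have hA' : ∀ p ∈ A', p.Prime := fun p hp => prime_of_mem_primesBelow_ceil (mem_filter.1 hp).1
  have hAq : A ⊆ q.primeFactors := fun p hp =>
    Nat.mem_primeFactors.2 ⟨hA p hp, (mem_filter.1 hp).2, hq.ne'⟩
  have hsplit : siftedDensity (Nat.primesBelow ⌈z⌉₊) = siftedDensity A * siftedDensity A' := by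
    rw [← siftedDensity_union (disjoint_filter_filter_not _ _ _), filter_union_filter_not_eq]
  have hmono : siftedDensity q.primeFactors ≤ siftedDensity A := by
    rw [← sdiff_union_of_subset hAq, siftedDensity_union sdiff_disjoint]
    refine mul_le_of_le_one_left (siftedDensity_pos hA).le (prod_le_one (fun p hp => ?_)
      fun p _ => sub_le_self _ (by positivity))
    have : (1 : ℝ) ≤ p := by
      exact_mod_cast (Nat.prime_of_mem_primeFactors (mem_sdiff.1 hp).1).one_le
    rw [sub_nonneg]
    exact div_le_one_of_le₀ this (Nat.cast_nonneg p)
  have hφ : (0 : ℝ) < q.totient := by exact_mod_cast Nat.totient_pos.2 hq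
  have hlog : 0 < Real.log z := Real.log_pos hz
  have hV' := (siftedDensity_pos hA').le
  rw [le_div_iff₀ hlog, le_div_iff₀ hφ, siftedDensity_primeFactors]
  calc siftedDensity A' * Real.log z * (q * siftedDensity q.primeFactors)
      ≤ siftedDensity A' * Real.log z * (q * siftedDensity A) := by gcongr
    _ = siftedDensity (Nat.primesBelow ⌈z⌉₊) * Real.log z * q := by rw [hsplit]; ring
    _ ≤ q := mul_le_of_le_one_left q.cast_nonneg (siftedDensity_primesBelow_mul_log_le hz.le)

end PrimesBelow

section Totient

theorem one_div_card_add_one_le_siftedDensity {S : Finset ℕ} (hS : ∀ p ∈ S, 2 ≤ p) :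
    1 / ((#S : ℝ) + 1) ≤ siftedDensity S := by
  induction S using Finset.induction_on_max with
  | empty => simp [siftedDensity_empty]
  | insert a s hmax ih =>
    have has : a ∉ s := fun h => (hmax a h).false
    have hcard : #s + 2 ≤ a := by
      have := card_le_card (fun p hp => mem_Ico.2 ⟨hS p (mem_insert_of_mem hp), hmax p hp⟩ :
        s ⊆ Ico 2 a)
      rw [Nat.card_Ico] at this
      have := hS a (mem_insert_self a s)
      omega
    have hcard' : (#s : ℝ) + 2 ≤ a := by exact_mod_cast hcard
    rw [siftedDensity, prod_insert has, card_insert_of_notMem has]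
    calc 1 / (((#s + 1 : ℕ) : ℝ) + 1) = (1 - 1 / ((#s : ℝ) + 2)) * (1 / ((#s : ℝ) + 1)) := by
          push_cast
          field_simp
          ring
      _ ≤ (1 - 1 / (a : ℝ)) * siftedDensity s := by
          refine mul_le_mul (by gcongr) (ih fun p hp => hS p (mem_insert_of_mem hp))
            (by positivity) (sub_nonneg.2 ?_)
          rw [div_le_one (by linarith)]
          linarith

theorem card_primeFactors_mul_log_two_le {q : ℕ} (hq : 0 < q) :
    #q.primeFactors * Real.log 2 ≤ Real.log q := by
  rw [← Real.log_pow]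
  refine Real.log_le_log (by positivity) ?_
  have hpow : 2 ^ #q.primeFactors ≤ q :=
    (pow_card_le_prod _ _ _ fun p hp => (Nat.prime_of_mem_primeFactors hp).two_le).trans
      (Nat.le_of_dvd hq (Nat.prod_primeFactors_dvd q))
  exact_mod_cast hpow

theorem one_le_div_totient {q : ℕ} (hq : 0 < q) : 1 ≤ (q : ℝ) / q.totient := by
  rw [one_le_div (by exact_mod_cast Nat.totient_pos.2 hq)]
  exact_mod_cast q.totient_le

theorem div_totient_le {q : ℕ} (hq : 0 < q) : (q : ℝ) / q.totient ≤ 1 + 2 * Real.log q := by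
  have hω : 1 / ((#q.primeFactors : ℝ) + 1) ≤ siftedDensity q.primeFactors :=
    one_div_card_add_one_le_siftedDensity fun p hp => (Nat.prime_of_mem_primeFactors hp).two_le
  have hq0 : (q : ℝ) ≠ 0 := by positivity
  have hlog := card_primeFactors_mul_log_two_le hq
  calc (q : ℝ) / q.totient = (siftedDensity q.primeFactors)⁻¹ := by
        rw [siftedDensity_primeFactors, div_mul_cancel_left₀ hq0]
    _ ≤ #q.primeFactors + 1 := by
        rw [← inv_inv ((#q.primeFactors : ℝ) + 1), ← one_div (_ + 1)]
        gcongr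
    _ ≤ 1 + 2 * Real.log q := by nlinarith [Real.log_two_gt_d9]

end Totient

/-! ### Exponential sums over rough numbers -/

section Exponentials

theorem norm_fourierChar (t : ℝ) : ‖(𝐞 t : ℂ)‖ = 1 := Circle.norm_coe _

theorem coe_fourierChar_add (s t : ℝ) : (𝐞 (s + t) : ℂ) = 𝐞 s * 𝐞 t := by
  rw [AddChar.map_add_eq_mul, Circle.coe_mul]

theorem coe_fourierChar_natCast_mul (l : ℕ) (t : ℝ) : (𝐞 (l * t) : ℂ) = (𝐞 t : ℂ) ^ l := by
  rw [← nsmul_eq_mul, AddChar.map_nsmul_eq_pow, Circle.coe_pow]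

theorem coe_fourierChar_intCast (m : ℤ) : (𝐞 (m : ℝ) : ℂ) = 1 := by
  rw [Real.fourierChar_apply, Complex.exp_eq_one_iff]
  exact ⟨m, by push_cast; ring⟩

theorem four_mul_le_norm_fourierChar_sub_one {t δ : ℝ} (h : ∀ m : ℤ, δ ≤ |t - m|) :
    4 * δ ≤ ‖(𝐞 t : ℂ) - 1‖ := by
  set s := t - round t
  have hperiod : (𝐞 t : ℂ) = 𝐞 s := by
    rw [← sub_add_cancel t (round t), coe_fourierChar_add, coe_fourierChar_intCast, mul_one]
  have hs : |Real.pi * s| ≤ Real.pi / 2 := by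
    rw [abs_mul, abs_of_pos Real.pi_pos]
    nlinarith [Real.pi_pos, abs_sub_round t]
  have hnorm : ‖(𝐞 s : ℂ) - 1‖ = 2 * |Real.sin (Real.pi * s)| := by
    rw [Real.fourierChar_apply, mul_comm _ Complex.I, Complex.norm_exp_I_mul_ofReal_sub_one,
      norm_mul, Real.norm_eq_abs, Real.norm_eq_abs, abs_two]
    ring_nf
  have hjordan : 2 * |s| ≤ |Real.sin (Real.pi * s)| :=
    calc 2 * |s| = 2 / Real.pi * |Real.pi * s| := by
          rw [abs_mul, abs_of_pos Real.pi_pos]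
          field_simp
      _ ≤ |Real.sin (Real.pi * s)| := Real.mul_abs_le_abs_sin hs
  rw [hperiod, hnorm]
  linarith [h (round t)]

theorem norm_sum_Ioc_fourierChar_mul_le {t δ : ℝ} (hδ : 0 < δ) (h : ∀ m : ℤ, δ ≤ |t - m|) (k : ℕ) :
    ‖∑ l ∈ Ioc 0 k, (𝐞 (l * t) : ℂ)‖ ≤ 1 / (2 * δ) := by
  have hdist := four_mul_le_norm_fourierChar_sub_one h
  have hgeom : (∑ l ∈ Ioc 0 k, (𝐞 (l * t) : ℂ)) * (𝐞 t - 1) = 𝐞 t * ((𝐞 t : ℂ) ^ k - 1) := by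
    rw [← geom_sum_mul, ← mul_assoc, mul_sum]
    congr 1
    rw [← Ico_add_one_add_one_eq_Ioc, sum_Ico_eq_sum_range]
    refine sum_congr (by simp) fun i _ => ?_
    rw [coe_fourierChar_natCast_mul, pow_add, zero_add, pow_one]
  have hmul : ‖∑ l ∈ Ioc 0 k, (𝐞 (l * t) : ℂ)‖ * ‖(𝐞 t : ℂ) - 1‖ ≤ 2 := by
    rw [← norm_mul, hgeom, norm_mul, norm_fourierChar, one_mul]
    refine (norm_sub_le _ _).trans ?_
    rw [norm_pow, norm_fourierChar, one_pow, norm_one, one_add_one_eq_two]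
  rw [le_div_iff₀ (by positivity)]
  nlinarith [norm_nonneg (∑ l ∈ Ioc 0 k, (𝐞 (l * t) : ℂ))]

end Exponentials

/-- `q` is the denominator of a reduced fraction approximating `α` as well as in Dirichlet's theorem
with parameter `Q`. -/
def IsDirichletDenom (α Q : ℝ) (q : ℕ) : Prop :=
  0 < q ∧ ∃ a : ℤ, IsCoprime a (q : ℤ) ∧ |α - a / q| ≤ 1 / (q * Q)

section Dirichlet

variable {α Q : ℝ} {q : ℕ}

theorem exists_isDirichletDenom_le (α : ℝ) (hQ : 1 ≤ Q) :
    ∃ q : ℕ, (q : ℝ) ≤ Q ∧ IsDirichletDenom α Q q := by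
  obtain ⟨r, hr, hden⟩ := Real.exists_rat_abs_sub_le_and_den_le α (Nat.floor_pos.2 hQ)
  have : (0 : ℝ) < r.den := by exact_mod_cast r.den_pos
  refine ⟨r.den, (Nat.cast_le.2 hden).trans (Nat.floor_le (by linarith)), r.den_pos, r.num,
    Int.isCoprime_iff_gcd_eq_one.2 r.reduced, ?_⟩
  rw [← Rat.cast_def, mul_comm]
  refine hr.trans ?_
  have := (Nat.lt_floor_add_one Q).le
  gcongr

theorem IsDirichletDenom.one_div_le_abs_sub (h : IsDirichletDenom α Q q) {k : ℤ}
    (hk : ¬ (q : ℤ) ∣ k) (hkQ : |(k : ℝ)| ≤ Q / 2) (m : ℤ) :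
    1 / (2 * (q : ℝ)) ≤ |k * α - m| := by
  obtain ⟨hq, a, hcop, ha⟩ := h
  have hq' : (0 : ℝ) < q := by exact_mod_cast hq
  have hk0 : (0 : ℝ) < |(k : ℝ)| := abs_pos.2 (Int.cast_ne_zero.2 fun h0 => hk (h0 ▸ dvd_zero _))
  have hQ : 0 < Q := by linarith
  have hne : k * a - m * q ≠ 0 := fun h0 =>
    hk (hcop.symm.dvd_of_dvd_mul_right ⟨m, by linarith⟩)
  have hfrac : 1 / (q : ℝ) ≤ |k * ((a : ℝ) / q) - m| := by
    rw [show k * ((a : ℝ) / q) - m = ((k : ℝ) * a - m * q) / q by field_simp, abs_div,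
      abs_of_pos hq']
    gcongr
    exact_mod_cast Int.one_le_abs hne
  have herr : |k * (α - a / q)| ≤ 1 / (2 * q) :=
    calc |k * (α - a / q)| = |(k : ℝ)| * |α - a / q| := abs_mul _ _
      _ ≤ Q / 2 * (1 / (q * Q)) := by gcongr
      _ = 1 / (2 * q) := by field_simp
  have htri := abs_sub (k * α - m) (k * (α - a / q))
  rw [show k * α - m - k * (α - a / q) = k * ((a : ℝ) / q) - m by ring] at htri
  have hhalf : 1 / (q : ℝ) = 1 / (2 * q) + 1 / (2 * q) := by field_simp; norm_num
  linarith

theorem eventually_lt_of_isDirichletDenom (hα : Irrational α) (T : ℕ) :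
    ∀ᶠ Q : ℝ in atTop, ∀ q, IsDirichletDenom α Q q → T < q := by
  obtain ⟨δ, hdist, hδ⟩ := (((hα.eventually_forall_le_dist_cast_div_of_denom_le T).filter_mono
    nhdsWithin_le_nhds).and (self_mem_nhdsWithin : Set.Ioi (0 : ℝ) ∈ nhdsWithin 0 _)).exists
  filter_upwards [eventually_gt_atTop δ⁻¹] with Q hQ q hq
  obtain ⟨hq0, a, -, ha⟩ := hq
  by_contra! hqT
  have hδQ := (hdist q hqT a).trans ha
  have hq1 : (1 : ℝ) ≤ q := by exact_mod_cast hq0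
  have hQ0 : 0 < Q := (inv_pos.2 hδ).trans hQ
  have : 1 / (q * Q) ≤ 1 / Q := by gcongr; exact le_mul_of_one_le_left hQ0.le hq1
  rw [inv_lt_comm₀ hδ hQ0, ← one_div] at hQ
  linarith

end Dirichlet

section SievedExponentialSums

theorem sum_Ioc_filter_dvd {M : Type*} [AddCommMonoid M] (X : ℕ) {s : ℕ} (hs : 0 < s)
    (g : ℕ → M) : ∑ n ∈ Ioc 0 X with s ∣ n, g n = ∑ m ∈ Ioc 0 (X / s), g (s * m) := by
  refine (sum_nbij (s * ·) (fun m hm => ?_) (fun a _ b _ h => Nat.eq_of_mul_eq_mul_left hs h)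
    (fun n hn => ?_) fun _ _ => rfl).symm
  · rw [mem_Ioc, Nat.le_div_iff_mul_le hs, mul_comm] at hm
    exact mem_filter.2 ⟨mem_Ioc.2 ⟨Nat.mul_pos hs hm.1, hm.2⟩, dvd_mul_right _ _⟩
  · obtain ⟨hn, m, rfl⟩ := mem_filter.1 hn
    rw [mem_Ioc] at hn
    refine ⟨m, mem_Ioc.2 ⟨Nat.pos_of_mul_pos_left hn.1, ?_⟩, rfl⟩
    rw [Nat.le_div_iff_mul_le hs, mul_comm]
    exact hn.2

theorem norm_ofReal_mul_fourierChar {x : ℝ} (hx : 0 ≤ x) (t : ℝ) : ‖(x : ℂ) * 𝐞 t‖ = x := by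
  rw [norm_mul, norm_fourierChar, mul_one, Complex.norm_of_nonneg hx]

theorem norm_sum_mul_fourierChar_le_add {f w e : ℕ → ℝ} (hfw : ∀ n, f n ≤ w n)
    (hwe : ∀ n, w n ≤ f n + e n) (X : ℕ) (t : ℝ) :
    ‖∑ n ∈ Ioc 0 X, (f n : ℂ) * 𝐞 (n * t)‖ ≤
      ‖∑ n ∈ Ioc 0 X, (w n : ℂ) * 𝐞 (n * t)‖ + ∑ n ∈ Ioc 0 X, e n := by
  have hsplit : ∑ n ∈ Ioc 0 X, (f n : ℂ) * 𝐞 (n * t) =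
      ∑ n ∈ Ioc 0 X, (w n : ℂ) * 𝐞 (n * t) - ∑ n ∈ Ioc 0 X, ((w n - f n : ℝ) : ℂ) * 𝐞 (n * t) := by
    simp only [← sum_sub_distrib, Complex.ofReal_sub, sub_mul, sub_sub_cancel]
  rw [hsplit]
  refine (norm_sub_le _ _).trans ?_
  gcongr
  refine norm_sum_le_of_le _ fun n _ => ?_
  rw [norm_ofReal_mul_fourierChar (sub_nonneg.2 (hfw n))]
  linarith [hwe n]

namespace IsDivisorSum

variable {P : Finset ℕ} {D B v α Q : ℝ} {f : ℕ → ℝ} {q : ℕ}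

theorem apply_mul (h : IsDivisorSum P D B f v) {s : ℕ} (hs : s ≠ 0)
    (hPs : Disjoint P s.primeFactors) (m : ℕ) : f (s * m) = f m := by
  obtain ⟨ι, _, c, d, hd, -, -, hf, -⟩ := h
  simp only [hf, (coprime_of_mem_factoredNumbers (hd _) hs hPs).dvd_mul_left]

theorem norm_sum_mul_fourierChar_le_of_forall (h : IsDivisorSum P D B f v) {t G : ℝ} (hG : 0 ≤ G)
    (hd : ∀ d ∈ Nat.factoredNumbers P, (d : ℝ) ≤ D → ∀ Y : ℕ,
      ‖∑ l ∈ Ioc 0 Y, (𝐞 (l * (d * t)) : ℂ)‖ ≤ G) (X : ℕ) :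
    ‖∑ n ∈ Ioc 0 X, (f n : ℂ) * 𝐞 (n * t)‖ ≤ B * G := by
  obtain ⟨ι, _, c, d, hdP, hdD, hc, hf, -⟩ := h
  have hmultiples (i : ι) : ∑ l ∈ Ioc 0 (X / d i), (𝐞 (l * (d i * t)) : ℂ) =
      ∑ n ∈ Ioc 0 X, if d i ∣ n then (𝐞 (n * t) : ℂ) else 0 := by
    rw [← sum_filter, sum_Ioc_filter_dvd X (Nat.pos_of_ne_zero (hdP i).1)]
    refine sum_congr rfl fun l _ => ?_
    rw [Nat.cast_mul, ← mul_assoc, mul_comm (l : ℝ)]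
  have hexpand : ∑ n ∈ Ioc 0 X, (f n : ℂ) * 𝐞 (n * t) =
      ∑ i, (c i : ℂ) * ∑ l ∈ Ioc 0 (X / d i), (𝐞 (l * (d i * t)) : ℂ) := by
    simp_rw [hmultiples, mul_sum]
    rw [sum_comm]
    refine sum_congr rfl fun n _ => ?_
    rw [hf n]
    push_cast
    rw [sum_mul]
    refine sum_congr rfl fun i _ => ?_
    split_ifs <;> simp
  rw [hexpand]
  calc _ ≤ ∑ i, |c i| * G := norm_sum_le_of_le _ fun i _ => by
        rw [norm_mul, Complex.norm_real, Real.norm_eq_abs]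
        gcongr
        exact hd _ (hdP i) (hdD i) _
    _ ≤ B * G := by rw [← sum_mul]; gcongr

theorem norm_sum_mul_fourierChar_le (h : IsDivisorSum P D B f v) (hA : IsDirichletDenom α Q q)
    {k : ℤ} (hd : ∀ d ∈ Nat.factoredNumbers P, (d : ℝ) ≤ D → ¬ (q : ℤ) ∣ d * k)
    (hk : D * |(k : ℝ)| ≤ Q / 2) (X : ℕ) :
    ‖∑ n ∈ Ioc 0 X, (f n : ℂ) * 𝐞 (n * (k * α))‖ ≤ B * q := by
  have hq : (0 : ℝ) < q := by exact_mod_cast hA.1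
  refine h.norm_sum_mul_fourierChar_le_of_forall hq.le (fun d hdP hdD Y => ?_) X
  have hdist (m : ℤ) : 1 / (2 * (q : ℝ)) ≤ |d * (k * α) - m| := by
    rw [← mul_assoc]
    refine mod_cast hA.one_div_le_abs_sub (hd d hdP hdD) ?_ m
    push_cast
    rw [abs_mul, Nat.abs_cast]
    exact (mul_le_mul_of_nonneg_right hdD (abs_nonneg _)).trans hk
  refine (norm_sum_Ioc_fourierChar_mul_le (by positivity) hdist Y).trans_eq ?_
  field_simp

end IsDivisorSum

theorem sifted_eq_sum_powerset {P : Finset ℕ} (hP : ∀ p ∈ P, p.Prime) (n : ℕ) :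
    sifted P n = ∑ S ∈ P.powerset, (-1) ^ #S * if ∏ p ∈ S, p ∣ n then 1 else 0 := by
  have hprod : sifted P n = ∏ p ∈ P, (1 - if p ∣ n then (1 : ℝ) else 0) := by
    rw [sifted]
    split_ifs with h
    · exact (prod_eq_one fun p hp => by rw [if_neg (h p hp), sub_zero]).symm
    · push Not at h
      obtain ⟨p, hp, hpn⟩ := h
      exact (prod_eq_zero hp (by rw [if_pos hpn, sub_self])).symm
  simp only [hprod, sub_eq_add_neg, prod_one_add, prod_neg]
  refine sum_congr rfl fun S hS => ?_
  have hdvd : ∏ p ∈ S, p ∣ n ↔ ∀ p ∈ S, p ∣ n :=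
    ⟨fun h p hp => (dvd_prod_of_mem _ hp).trans h,
      prod_primes_dvd n fun p hp => (hP p (mem_powerset.1 hS hp)).prime⟩
  simp only [hdvd, prod_ite_zero, prod_const_one]

theorem sum_mul_sifted_mul_fourierChar {P : Finset ℕ} (hP : ∀ p ∈ P, p.Prime) {w : ℕ → ℝ}
    (hw : ∀ S ⊆ P, ∀ m, w ((∏ p ∈ S, p) * m) = w m) (X : ℕ) (t : ℝ) :
    ∑ n ∈ Ioc 0 X, ((w n * sifted P n : ℝ) : ℂ) * 𝐞 (n * t) =
      ∑ S ∈ P.powerset, (-1) ^ #S *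
        ∑ m ∈ Ioc 0 (X / ∏ p ∈ S, p), (w m : ℂ) * 𝐞 (m * (((∏ p ∈ S, p : ℕ) : ℤ) * t)) := by
  have hmultiples (S) (hS : S ∈ P.powerset) :
      ∑ m ∈ Ioc 0 (X / ∏ p ∈ S, p), (w m : ℂ) * 𝐞 (m * (((∏ p ∈ S, p : ℕ) : ℤ) * t)) =
        ∑ n ∈ Ioc 0 X, if ∏ p ∈ S, p ∣ n then (w n : ℂ) * 𝐞 (n * t) else 0 := by
    rw [mem_powerset] at hS
    rw [← sum_filter, sum_Ioc_filter_dvd X (prod_pos fun p hp => (hP p (hS hp)).pos)]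
    refine sum_congr rfl fun m _ => ?_
    rw [hw S hS, Int.cast_natCast, Nat.cast_mul, ← mul_assoc, mul_comm (m : ℝ)]
  rw [sum_congr rfl fun S hS => congrArg ((-1) ^ #S * ·) (hmultiples S hS)]
  simp_rw [mul_sum]
  rw [sum_comm]
  refine sum_congr rfl fun n _ => ?_
  rw [sifted_eq_sum_powerset hP]
  push_cast
  simp only [mul_sum, sum_mul]
  refine sum_congr rfl fun S _ => ?_
  split_ifs <;> push_cast <;> ring

end SievedExponentialSums

section RoughNumbers

theorem two_pow_card_le {P : Finset ℕ} {q : ℕ} (hq : 0 < q) (hP : P ⊆ q.primeFactors) :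
    2 ^ #P ≤ q :=
  calc 2 ^ #P ≤ ∏ p ∈ P, p :=
        pow_card_le_prod _ _ _ fun _ hp => (Nat.prime_of_mem_primeFactors (hP hp)).two_le
    _ ≤ q := Nat.le_of_dvd hq
        ((prod_dvd_prod_of_subset _ _ _ hP).trans (Nat.prod_primeFactors_dvd q))

variable {P P' : Finset ℕ} {D x α Q : ℝ} {q : ℕ}

theorem UpperSieve.norm_sum_mul_sifted_mul_fourierChar_le (s : UpperSieve P D D x)
    (hA : IsDirichletDenom α Q q) (hPP' : Disjoint P P') (hP' : P' ⊆ q.primeFactors)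
    (hDQ : ∀ S ⊆ P', D * (∏ p ∈ S, p : ℕ) ≤ Q / 2)
    (hdvd : ∀ S ⊆ P', ∀ d ∈ Nat.factoredNumbers P, (d : ℝ) ≤ D → q ∣ d * ∏ p ∈ S, p →
      ∏ p ∈ S, p = q) (hD : 0 ≤ D) (X : ℕ) :
    ‖∑ n ∈ Ioc 0 X, ((s.w n * sifted P' n : ℝ) : ℂ) * 𝐞 (n * α)‖ ≤
      2 ^ #P' * (D * q) + (X / q * s.vw + D) := by
  have hprime (p) (hp : p ∈ P') : p.Prime := Nat.prime_of_mem_primeFactors (hP' hp)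
  have hprime_sub (S) (hS : S ⊆ P') : (∏ p ∈ S, p).primeFactors = S :=
    Nat.primeFactors_prod fun p hp => hprime p (hS hp)
  have hv : 0 ≤ s.vw := s.isDivisorSum_w.density_nonneg s.w_nonneg
  rw [sum_mul_sifted_mul_fourierChar hprime fun S hS m => s.isDivisorSum_w.apply_mul
    (prod_ne_zero_iff.2 fun p hp => (hprime p (hS hp)).ne_zero)
    (by rw [hprime_sub S hS]; exact disjoint_of_subset_right hS hPP') m]
  have hterm (S) (hS : S ∈ P'.powerset) : ‖(-1 : ℂ) ^ #S * ∑ m ∈ Ioc 0 (X / ∏ p ∈ S, p),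
      (s.w m : ℂ) * 𝐞 (m * (((∏ p ∈ S, p : ℕ) : ℤ) * α))‖ ≤
        D * q + if S = q.primeFactors then X / q * s.vw + D else 0 := by
    rw [mem_powerset] at hS
    rw [norm_mul, norm_pow, norm_neg, norm_one, one_pow, one_mul]
    by_cases hSq : ∏ p ∈ S, p = q
    · rw [if_pos (by rw [← hSq, hprime_sub S hS]), hSq]
      have htriv : ‖∑ m ∈ Ioc 0 (X / q), (s.w m : ℂ) * 𝐞 (m * ((q : ℤ) * α))‖ ≤
          ∑ m ∈ Ioc 0 (X / q), s.w m :=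
        norm_sum_le_of_le _ fun m _ => (norm_ofReal_mul_fourierChar (s.w_nonneg m) _).le
      have hsum := (abs_le.1 (s.isDivisorSum_w.abs_sum_Ioc_sub_le (X / q))).2
      have : ((X / q : ℕ) : ℝ) * s.vw ≤ X / q * s.vw := by gcongr; exact Nat.cast_div_le
      have : 0 ≤ D * q := by positivity
      linarith
    · refine (s.isDivisorSum_w.norm_sum_mul_fourierChar_le hA
        (fun d hd hdD h => hSq (hdvd S hS d hd hdD (by exact_mod_cast h)))
        (by rw [Int.cast_natCast, Nat.abs_cast]; exact hDQ S hS) _).trans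
        (le_add_of_nonneg_right ?_)
      split_ifs <;> positivity
  refine (norm_sum_le_of_le _ hterm).trans ?_
  rw [sum_add_distrib, sum_const, card_powerset, nsmul_eq_mul, sum_ite_eq', Nat.cast_pow,
    Nat.cast_two]
  gcongr
  split_ifs
  exacts [le_rfl, by positivity]

theorem UpperSieve.norm_sum_sifted_union_mul_fourierChar_le (s : UpperSieve P D D x)
    (hA : IsDirichletDenom α Q q) (hPP' : Disjoint P P') (hP' : P' ⊆ q.primeFactors)
    (hDQ : ∀ S ⊆ P', D * (∏ p ∈ S, p : ℕ) ≤ Q / 2)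
    (hdvd : ∀ S ⊆ P', ∀ d ∈ Nat.factoredNumbers P, (d : ℝ) ≤ D → q ∣ d * ∏ p ∈ S, p →
      ∏ p ∈ S, p = q) (hD : 0 ≤ D) (X : ℕ) :
    ‖∑ n ∈ Ioc 0 X, (sifted (P ∪ P') n : ℂ) * 𝐞 (n * α)‖ ≤
      2 ^ #P' * (D * q) + (X / q * s.vw + D) + (X * (s.ve * siftedDensity P') + D * 2 ^ #P') := by
  have hprime (p) (hp : p ∈ P') : p.Prime := Nat.prime_of_mem_primeFactors (hP' hp)
  have hmain := s.norm_sum_mul_sifted_mul_fourierChar_le hA hPP' hP' hDQ hdvd hD X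
  have herror := (abs_le.1 ((s.isDivisorSum_e.mul (isDivisorSum_sifted hprime (z := q)
    (by exact_mod_cast hA.1) fun p hp => by
      exact_mod_cast Nat.le_of_mem_primeFactors (hP' hp)) hPP').abs_sum_Ioc_sub_le X)).2
  have hcompare := norm_sum_mul_fourierChar_le_add (f := sifted (P ∪ P'))
    (w := fun n => s.w n * sifted P' n) (e := fun n => s.e n * sifted P' n)
    (fun n => by
      rw [sifted_union]
      exact mul_le_mul_of_nonneg_right (s.sifted_le_w n) (sifted_nonneg _ _))
    (fun n => by
      rw [sifted_union, ← add_mul]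
      exact mul_le_mul_of_nonneg_right (s.w_le n) (sifted_nonneg _ _)) X α
  linarith

/-- For `q ≤ D` the primes dividing `q` are sieved exactly, as sieve weights on them would produce
frequencies `dα` close to integers; for `q > D` there is no such frequency with `d ≤ D`. -/
theorem exists_union_eq_primesBelow {z N : ℝ} (hz : 2 ≤ z) (hD : 1 ≤ D) (hDN : 2 * D ^ 4 ≤ N)
    (hq : 0 < q) (hqN : (q : ℝ) ≤ N / D ^ 2) :
    ∃ P P' : Finset ℕ, P ∪ P' = Nat.primesBelow ⌈z⌉₊ ∧ Disjoint P P' ∧ P' ⊆ q.primeFactors ∧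
      (∀ S ⊆ P', D * (∏ p ∈ S, p : ℕ) ≤ N / D ^ 2 / 2) ∧
      (∀ S ⊆ P', ∀ d ∈ Nat.factoredNumbers P, (d : ℝ) ≤ D → q ∣ d * ∏ p ∈ S, p → ∏ p ∈ S, p = q) ∧
      siftedDensity P ≤ q / q.totient / Real.log z ∧
      2 ^ #P' * (D * q) + D + D * 2 ^ #P' ≤ N / D + 3 * D ^ 3 := by
  have hDQ : D ^ 2 ≤ N / D ^ 2 / 2 := by
    rw [div_div, le_div_iff₀ (by positivity)]
    linarith
  have hlog : 0 < Real.log z := Real.log_pos (by linarith)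
  have hD23 : D ^ 2 ≤ D ^ 3 := pow_le_pow_right₀ hD (by norm_num)
  have hD12 : D ≤ D ^ 2 := le_self_pow₀ hD two_ne_zero
  rcases le_or_gt (q : ℝ) D with hqD | hqD
  · set P' := {p ∈ Nat.primesBelow ⌈z⌉₊ | p ∣ q}
    have hP' : P' ⊆ q.primeFactors := fun p hp => by
      obtain ⟨hp, hpq⟩ := mem_filter.1 hp
      exact Nat.mem_primeFactors.2 ⟨prime_of_mem_primesBelow_ceil hp, hpq, hq.ne'⟩
    have hprod (S) (hS : S ⊆ P') : ∏ p ∈ S, p ∣ q :=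
      (prod_dvd_prod_of_subset _ _ _ (hS.trans hP')).trans (Nat.prod_primeFactors_dvd q)
    refine ⟨{p ∈ Nat.primesBelow ⌈z⌉₊ | ¬ p ∣ q}, P',
      by rw [union_comm, filter_union_filter_not_eq], (disjoint_filter_filter_not _ _ _).symm,
      hP', fun S hS => ?_, fun S hS d hd _ hqdS => ?_,
      siftedDensity_primesBelow_filter_not_dvd_le (by linarith) hq, ?_⟩
    · have : ((∏ p ∈ S, p : ℕ) : ℝ) ≤ q := by exact_mod_cast Nat.le_of_dvd hq (hprod S hS)
      nlinarith
    · refine Nat.dvd_antisymm (hprod S hS) (Nat.Coprime.dvd_of_dvd_mul_left ?_ hqdS)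
      refine (coprime_of_mem_factoredNumbers hd hq.ne' (disjoint_left.2 fun p hp hpq => ?_)).symm
      exact (mem_filter.1 hp).2 (Nat.dvd_of_mem_primeFactors hpq)
    · have hpow : (2 : ℝ) ^ #P' ≤ D := le_trans (by exact_mod_cast two_pow_card_le hq hP') hqD
      have : 2 ^ #P' * (D * q) ≤ D * (D * D) := by gcongr
      have : D * 2 ^ #P' ≤ D * D := by gcongr
      have : 0 ≤ N / D := div_nonneg (by linarith [show 0 ≤ D ^ 4 by positivity]) (by linarith)
      nlinarith
  · refine ⟨Nat.primesBelow ⌈z⌉₊, ∅, union_empty _, disjoint_empty_right _, empty_subset _,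
      fun S hS => ?_, fun S hS d hd hdD hqdS => ?_, ?_, ?_⟩
    · rw [subset_empty.1 hS, prod_empty, Nat.cast_one, mul_one]
      exact hD12.trans hDQ
    · rw [subset_empty.1 hS, prod_empty, mul_one] at hqdS
      have : (q : ℝ) ≤ d := by exact_mod_cast Nat.le_of_dvd (Nat.pos_of_ne_zero hd.1) hqdS
      linarith
    · rw [le_div_iff₀ hlog]
      exact (siftedDensity_primesBelow_mul_log_le (by linarith)).trans (one_le_div_totient hq)
    · have : D * q ≤ N / D :=
        calc D * q ≤ D * (N / D ^ 2) := by gcongr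
          _ = N / D := by field_simp
      rw [card_empty, pow_zero, one_mul, mul_one]
      linarith

theorem exists_norm_sum_sifted_primesBelow_le : ∃ K : ℝ, 1 ≤ K ∧
    ∀ (b : ℕ) (z D N α : ℝ) (q : ℕ), 2 ≤ z → D = z ^ (4 * b + 8) → 2 * D ^ 4 ≤ N →
      IsDirichletDenom α (N / D ^ 2) q → (q : ℝ) ≤ N / D ^ 2 → ∀ X : ℕ, (X : ℝ) ≤ N →
        ‖∑ n ∈ Ioc 0 X, (sifted (Nat.primesBelow ⌈z⌉₊) n : ℂ) * 𝐞 (n * α)‖ ≤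
          N / D + 3 * D ^ 3 + N * K * ((1 / 4) ^ b + 1 / q.totient) / Real.log z := by
  obtain ⟨K, hK, hsieve⟩ := exists_upperSieve
  refine ⟨K, hK, fun b z D N α q hz hDz hDN hA hqN X hXN => ?_⟩
  have hD : 1 ≤ D := hDz ▸ one_le_pow₀ (by linarith)
  obtain ⟨P, P', hPP', hdisj, hP', hDQ, hdvd, hdensity, hbound⟩ :=
    exists_union_eq_primesBelow hz hD hDN hA.1 hqN
  obtain ⟨x, s, hvw, hve⟩ : ∃ (x : ℝ) (s : UpperSieve P D D x),
      s.vw ≤ K * siftedDensity P ∧ s.ve ≤ K * (1 / 4) ^ b * siftedDensity P :=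
    hDz ▸ hsieve b z P hz fun p hp => mem_primesBelow_ceil.1 (hPP' ▸ mem_union_left P' hp)
  have hsum := s.norm_sum_sifted_union_mul_fourierChar_le hA hdisj hP' hDQ hdvd (by linarith) X
  rw [hPP'] at hsum
  have hN : 0 ≤ N := X.cast_nonneg.trans hXN
  have hlog : 0 < Real.log z := Real.log_pos (by linarith)
  have hq : (0 : ℝ) < q := by exact_mod_cast hA.1
  have hφ : (0 : ℝ) < q.totient := by exact_mod_cast Nat.totient_pos.2 hA.1
  have hmain : X / q * s.vw ≤ N * K * (1 / q.totient) / Real.log z :=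
    calc X / q * s.vw ≤ N / q * (K * (q / q.totient / Real.log z)) := by
          have := s.isDivisorSum_w.density_nonneg s.w_nonneg
          gcongr
          exact hvw.trans (by gcongr)
      _ = N * K * (1 / q.totient) / Real.log z := by field_simp
  have hP'_nonneg : 0 ≤ siftedDensity P' :=
    (siftedDensity_pos fun p hp => Nat.prime_of_mem_primeFactors (hP' hp)).le
  have herror : X * (s.ve * siftedDensity P') ≤ N * K * (1 / 4) ^ b / Real.log z :=
    calc X * (s.ve * siftedDensity P')
        ≤ N * (K * (1 / 4) ^ b * siftedDensity P * siftedDensity P') := by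
          have := s.isDivisorSum_e.density_nonneg s.e_nonneg
          gcongr
      _ = N * (K * (1 / 4) ^ b) * siftedDensity (Nat.primesBelow ⌈z⌉₊) := by
          rw [← hPP', siftedDensity_union hdisj]
          ring
      _ ≤ N * (K * (1 / 4) ^ b) * (1 / Real.log z) := by
          gcongr
          exact (le_div_iff₀ hlog).2 (siftedDensity_primesBelow_mul_log_le (by linarith))
      _ = N * K * (1 / 4) ^ b / Real.log z := by ring
  rw [mul_add, add_div]
  linarith

end RoughNumbers

section Asymptotics

theorem eventually_rpow_mul_log_pow_le {c η : ℝ} (hc : c < 1) (k : ℕ) (hη : 0 < η) :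
    ∀ᶠ N : ℕ in atTop, (N : ℝ) ^ c * Real.log N ^ k ≤ η * N := by
  have hlog := (isLittleO_log_rpow_rpow_atTop (k : ℝ) (sub_pos.2 hc)).bound hη
  filter_upwards [tendsto_natCast_atTop_atTop.eventually hlog, eventually_gt_atTop 0] with N hN hN0
  rw [Real.rpow_natCast, Real.norm_of_nonneg (pow_nonneg (Real.log_natCast_nonneg N) k),
    Real.norm_of_nonneg (by positivity)] at hN
  calc (N : ℝ) ^ c * Real.log N ^ k ≤ (N : ℝ) ^ c * (η * (N : ℝ) ^ (1 - c)) := by gcongr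
    _ = η * ((N : ℝ) ^ c * (N : ℝ) ^ (1 - c)) := by ring
    _ = η * N := by rw [← Real.rpow_add (by exact_mod_cast hN0), add_sub_cancel, Real.rpow_one]

theorem tendsto_div_totient_sq_div_sqrt :
    Tendsto (fun q : ℕ => ((q : ℝ) / q.totient) ^ 2 / √q) atTop (nhds 0) := by
  have hlog : Tendsto (fun q : ℕ => 9 * (Real.log q ^ 2 / √q)) atTop (nhds 0) := by
    have := (isLittleO_log_rpow_rpow_atTop 2 (s := 1 / 2) (by norm_num)).tendsto_div_nhds_zero
    simpa [Real.sqrt_eq_rpow, Function.comp_def] using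
      (this.comp tendsto_natCast_atTop_atTop).const_mul 9
  refine squeeze_zero' (Eventually.of_forall fun q => by positivity) ?_ hlog
  have hone : ∀ᶠ q : ℕ in atTop, 1 ≤ Real.log q :=
    (Real.tendsto_log_atTop.comp tendsto_natCast_atTop_atTop).eventually_ge_atTop 1
  filter_upwards [hone, eventually_gt_atTop 0] with q hq hq0
  rw [← mul_div_assoc]
  gcongr
  calc ((q : ℝ) / q.totient) ^ 2 ≤ (3 * Real.log q) ^ 2 := by
        gcongr
        linarith [div_totient_le hq0]
    _ = 9 * Real.log q ^ 2 := by ring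

theorem one_div_totient_le {q : ℕ} (hq : 0 < q) :
    1 / (q.totient : ℝ) ≤ ((q : ℝ) / q.totient) ^ 2 / √q := by
  have hq1 : (1 : ℝ) ≤ q := by exact_mod_cast hq
  have hsqrt : √(q : ℝ) ≤ q := Real.sqrt_le_left (by linarith) |>.2 (by nlinarith)
  have hratio := one_le_div_totient hq
  calc 1 / (q.totient : ℝ) = (q : ℝ) / q.totient / q := by field_simp
    _ ≤ ((q : ℝ) / q.totient) ^ 2 / √q := by
      gcongr
      exact le_self_pow₀ hratio two_ne_zero

theorem eventually_forall_isDirichletDenom {α : ℝ} (hα : Irrational α) {p : ℕ → Prop}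
    (hp : ∀ᶠ q in atTop, p q) : ∀ᶠ Q : ℝ in atTop, ∀ q, IsDirichletDenom α Q q → p q := by
  obtain ⟨T, hT⟩ := eventually_atTop.1 hp
  filter_upwards [eventually_lt_of_isDirichletDenom hα T] with Q hQ q hq using hT q (hQ q hq).le

theorem tendsto_natCast_rpow_atTop {c : ℝ} (hc : 0 < c) :
    Tendsto (fun N : ℕ => (N : ℝ) ^ c) atTop atTop :=
  (tendsto_rpow_atTop hc).comp tendsto_natCast_atTop_atTop

theorem exists_pow_le_div_mul_add {K η : ℝ} (hη : 0 < η) :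
    ∃ b : ℕ, K * (1 / 4) ^ b ≤ η / (8 * (4 * b + 8)) := by
  have hlin : Tendsto (fun b : ℕ => K * (32 * ((b : ℝ) * (1 / 4) ^ b) + 64 * (1 / 4) ^ b))
      atTop (nhds (K * (32 * 0 + 64 * 0))) :=
    (((tendsto_self_mul_const_pow_of_lt_one (by norm_num) (by norm_num)).const_mul 32).add
      ((tendsto_pow_atTop_nhds_zero_of_lt_one (by norm_num) (by norm_num)).const_mul 64)).const_mul
      K
  obtain ⟨b, hb⟩ := (hlin.eventually_le_const (by simpa using hη)).exists
  refine ⟨b, ?_⟩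
  rw [le_div_iff₀ (by positivity)]
  linarith

theorem exists_norm_sum_sifted_rpow_le : ∃ K : ℝ, 1 ≤ K ∧
    ∀ (b : ℕ) (ε N α : ℝ) (q : ℕ), ε = 1 / (8 * (4 * b + 8)) → 2 ≤ N ^ ε → 4 ≤ N →
      IsDirichletDenom α (N ^ (3 / 4 : ℝ)) q → (q : ℝ) ≤ N ^ (3 / 4 : ℝ) → ∀ X : ℕ, (X : ℝ) ≤ N →
        ‖∑ n ∈ Ioc 0 X, (sifted (Nat.primesBelow ⌈N ^ ε⌉₊) n : ℂ) * 𝐞 (n * α)‖ ≤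
          N ^ (7 / 8 : ℝ) + 3 * N ^ (3 / 8 : ℝ) +
            N * K * ((1 / 4) ^ b + 1 / q.totient) / (ε * Real.log N) := by
  obtain ⟨K, hK, hrough⟩ := exists_norm_sum_sifted_primesBelow_le
  refine ⟨K, hK, fun b ε N α q hε hz hN4 hA hqN X hX => ?_⟩
  have hN : 0 < N := by linarith
  set D : ℝ := N ^ (1 / 8 : ℝ) with hD
  have hDz : D = (N ^ ε) ^ (4 * b + 8) := by
    rw [← Real.rpow_mul_natCast hN.le, hε, hD]
    congr 1
    push_cast
    field_simp
  have hpow (k : ℕ) : D ^ k = N ^ ((k : ℝ) / 8) := by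
    rw [← Real.rpow_mul_natCast hN.le]
    ring_nf
  have hdiv {c : ℝ} : N / N ^ c = N ^ (1 - c) := by rw [Real.rpow_sub hN, Real.rpow_one]
  have hQ : N / D ^ 2 = N ^ (3 / 4 : ℝ) := by
    rw [hpow, hdiv]
    norm_num
  have hD4 : 2 * D ^ 4 ≤ N := by
    have hsqrt : 2 ≤ √N := (Real.le_sqrt' two_pos).2 (by linarith)
    rw [hpow, show ((4 : ℕ) : ℝ) / 8 = 1 / 2 by norm_num, ← Real.sqrt_eq_rpow]
    nlinarith [Real.mul_self_sqrt hN.le]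
  rw [← hQ] at hqN hA
  convert hrough b _ D N α q hz hDz hD4 hA hqN X hX using 3
  · rw [hdiv]
    norm_num
  · rw [hpow]
    norm_num
  · rw [Real.log_rpow hN]

theorem exists_eventually_norm_sum_sifted_le {α η : ℝ} (hα : Irrational α) (hη : 0 < η) :
    ∃ ε : ℝ, 0 < ε ∧ ε ≤ 1 / 64 ∧ ∀ᶠ N : ℕ in atTop, ∀ X ≤ N,
      ‖∑ n ∈ Ioc 0 X, (sifted (Nat.primesBelow ⌈(N : ℝ) ^ ε⌉₊) n : ℂ) * 𝐞 (n * α)‖ ≤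
        η * N / Real.log N := by
  obtain ⟨K, hK, hrough⟩ := exists_norm_sum_sifted_rpow_le
  obtain ⟨b, hb⟩ := exists_pow_le_div_mul_add (K := K) (show 0 < η / 3 by positivity)
  obtain ⟨ε, hε⟩ : ∃ ε : ℝ, ε = 1 / (8 * (4 * b + 8)) := ⟨_, rfl⟩
  have hε0 : 0 < ε := by rw [hε]; positivity
  have hdenom := (tendsto_natCast_rpow_atTop (show (0 : ℝ) < 3 / 4 by norm_num)).eventually
    (eventually_forall_isDirichletDenom hα
      (tendsto_div_totient_sq_div_sqrt.eventually_le_const (show 0 < η / 3 * ε / K by positivity)))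
  have hε64 : ε ≤ 1 / 64 :=
    hε ▸ one_div_le_one_div_of_le (by norm_num) (by linarith [b.cast_nonneg (α := ℝ)])
  refine ⟨ε, hε0, hε64, ?_⟩
  filter_upwards [eventually_rpow_mul_log_pow_le (show (7 / 8 : ℝ) < 1 by norm_num) 1
      (show 0 < η / 6 by positivity),
    eventually_rpow_mul_log_pow_le (show (3 / 8 : ℝ) < 1 by norm_num) 1
      (show 0 < η / 18 by positivity),
    (tendsto_natCast_rpow_atTop hε0).eventually_ge_atTop 2, hdenom, eventually_ge_atTop 4]
    with N h78 h38 hz hqlarge hN X hX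
  have hN' : (4 : ℝ) ≤ N := by exact_mod_cast hN
  have hlog : 0 < Real.log N := Real.log_pos (by linarith)
  obtain ⟨q, hqN, hA⟩ := exists_isDirichletDenom_le α
    (Real.one_le_rpow (by linarith : (1 : ℝ) ≤ N) (show (0 : ℝ) ≤ 3 / 4 by norm_num))
  refine (hrough b ε N α q hε hz hN' hA hqN X (by exact_mod_cast hX)).trans ?_
  have hφ : K * (1 / q.totient) ≤ η / 3 * ε := by
    have := (one_div_totient_le hA.1).trans (hqlarge q hA)
    rwa [le_div_iff₀ (by linarith), mul_comm] at this
  rw [div_eq_mul_one_div (η / 3), ← hε] at hb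
  have hlast : N * K * ((1 / 4) ^ b + 1 / q.totient) / (ε * Real.log N) * Real.log N ≤
      2 * (η / 3) * N :=
    calc _ = N * (K * (1 / 4) ^ b + K * (1 / q.totient)) / ε := by field_simp
      _ ≤ N * (η / 3 * ε + η / 3 * ε) / ε := by gcongr
      _ = 2 * (η / 3) * N := by field_simp; ring
  rw [pow_one] at h78 h38
  rw [le_div_iff₀ hlog]
  linarith

end Asymptotics

/-! ### From primes to rough numbers -/

section PrimesAndRoughNumbers

theorem monotone_log_natCast : Monotone fun n : ℕ => Real.log n := by
  refine monotone_nat_of_le_succ fun n => ?_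
  rcases n.eq_zero_or_pos with rfl | hn
  · simp
  · exact Real.log_le_log (Nat.cast_pos.2 hn) (Nat.cast_le.2 n.le_succ)

theorem norm_sum_Ioc_log_mul_le {f : ℕ → ℂ} {M : ℝ} {N : ℕ}
    (hf : ∀ X ≤ N, ‖∑ n ∈ Ioc 0 X, f n‖ ≤ M) :
    ‖∑ n ∈ Ioc 0 N, (Real.log n : ℂ) * f n‖ ≤ 2 * M * Real.log N := by
  have habel : ∀ X ≤ N, ‖∑ n ∈ Ioc 0 X, (Real.log n : ℂ) * f n -
      Real.log X * ∑ n ∈ Ioc 0 X, f n‖ ≤ M * Real.log X := by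
    intro X
    induction X with
    | zero => simp
    | succ X ih =>
      intro hX
      have hlog : 0 ≤ Real.log (X + 1 : ℕ) - Real.log X :=
        sub_nonneg.2 (monotone_log_natCast X.le_succ)
      rw [sum_Ioc_succ_top X.zero_le, sum_Ioc_succ_top X.zero_le]
      calc _ = ‖(∑ n ∈ Ioc 0 X, (Real.log n : ℂ) * f n - Real.log X * ∑ n ∈ Ioc 0 X, f n) -
            (Real.log (X + 1 : ℕ) - Real.log X : ℝ) * ∑ n ∈ Ioc 0 X, f n‖ := by
            push_cast; ring_nf
        _ ≤ M * Real.log X + (Real.log (X + 1 : ℕ) - Real.log X) * M := by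
            refine (norm_sub_le _ _).trans (add_le_add (ih (by omega)) ?_)
            rw [norm_mul, Complex.norm_of_nonneg hlog]
            exact mul_le_mul_of_nonneg_left (hf X (by omega)) hlog
        _ = M * Real.log (X + 1 : ℕ) := by ring
  have htop : ‖(Real.log N : ℂ) * ∑ n ∈ Ioc 0 N, f n‖ ≤ Real.log N * M := by
    rw [norm_mul, Complex.norm_of_nonneg (Real.log_natCast_nonneg N)]
    exact mul_le_mul_of_nonneg_left (hf N le_rfl) (Real.log_natCast_nonneg N)
  linarith [norm_le_norm_add_norm_sub' (∑ n ∈ Ioc 0 N, (Real.log n : ℂ) * f n)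
    (Real.log N * ∑ n ∈ Ioc 0 N, f n), habel N le_rfl]

theorem sifted_apply_mul {P : Finset ℕ} (hP : ∀ p ∈ P, p.Prime) (a b : ℕ) :
    sifted P (a * b) = sifted P a * sifted P b := by
  have hdvd : (∀ p ∈ P, ¬ p ∣ a * b) ↔ (∀ p ∈ P, ¬ p ∣ a) ∧ ∀ p ∈ P, ¬ p ∣ b := by
    simp only [← forall₂_and, ← not_or]
    exact forall₂_congr fun p hp => not_congr (hP p hp).dvd_mul
  simp only [sifted, hdvd, ite_and, ite_mul, one_mul, zero_mul]

theorem sifted_one {P : Finset ℕ} (hP : ∀ p ∈ P, p.Prime) : sifted P 1 = 1 :=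
  if_pos fun p hp => (hP p hp).not_dvd_one

theorem sifted_primesBelow_of_prime {z : ℝ} {p : ℕ} (hp : p.Prime) :
    sifted (Nat.primesBelow ⌈z⌉₊) p = if z ≤ p then 1 else 0 := by
  refine if_congr ⟨fun h => ?_, fun hz r hr hrp => ?_⟩ rfl rfl
  · by_contra! hz
    exact h p (mem_primesBelow_ceil.2 ⟨hp, hz⟩) dvd_rfl
  · rw [(Nat.prime_dvd_prime_iff_eq (prime_of_mem_primesBelow_ceil hr) hp).1 hrp] at hr
    exact hz.not_gt (mem_primesBelow_ceil.1 hr).2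

theorem le_of_prime_dvd_of_sifted_ne_zero {z : ℝ} {n p : ℕ}
    (hn : sifted (Nat.primesBelow ⌈z⌉₊) n ≠ 0) (hp : p.Prime) (hpn : p ∣ n) : z ≤ p := by
  by_contra! hz
  exact hn (if_neg fun h => h p (mem_primesBelow_ceil.2 ⟨hp, hz⟩) hpn)

/-- The logarithm of the radical of `n`; in a prime number sum over rough numbers it replaces
`log n`, since it is additive over the prime divisors. -/
noncomputable def logRadical (n : ℕ) : ℝ := ∑ p ∈ n.primeFactors, Real.log p

theorem logRadical_nonneg (n : ℕ) : 0 ≤ logRadical n :=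
  sum_nonneg fun p _ => Real.log_natCast_nonneg p

theorem logRadical_eq_log_prod (n : ℕ) :
    logRadical n = Real.log (∏ p ∈ n.primeFactors, p : ℕ) := by
  rw [logRadical, Nat.cast_prod, Real.log_prod fun p hp =>
    Nat.cast_ne_zero.2 (Nat.prime_of_mem_primeFactors hp).ne_zero]

theorem logRadical_le_log {n : ℕ} (hn : 0 < n) : logRadical n ≤ Real.log n := by
  rw [logRadical_eq_log_prod]
  exact monotone_log_natCast (Nat.le_of_dvd hn (Nat.prod_primeFactors_dvd n))

theorem logRadical_of_squarefree {n : ℕ} (hn : Squarefree n) : logRadical n = Real.log n := by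
  rw [logRadical_eq_log_prod, Nat.prod_primeFactors_of_squarefree hn]

theorem sum_Ioc_logRadical_mul (N : ℕ) (g : ℕ → ℂ) :
    ∑ n ∈ Ioc 0 N, (logRadical n : ℂ) * g n =
      ∑ p ∈ Ioc 0 N with p.Prime, (Real.log p : ℂ) * ∑ m ∈ Ioc 0 (N / p), g (p * m) := by
  have hfactors : ∀ n ∈ Ioc 0 N, n.primeFactors = {p ∈ {p ∈ Ioc 0 N | p.Prime} | p ∣ n} := by
    intro n hn
    rw [mem_Ioc] at hn
    ext p
    simp only [Nat.mem_primeFactors, mem_filter, mem_Ioc]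
    exact ⟨fun ⟨hp, hpn, _⟩ => ⟨⟨⟨hp.pos, (Nat.le_of_dvd hn.1 hpn).trans hn.2⟩, hp⟩, hpn⟩,
      fun ⟨⟨_, hp⟩, hpn⟩ => ⟨hp, hpn, hn.1.ne'⟩⟩
  calc _ = ∑ n ∈ Ioc 0 N, ∑ p ∈ Ioc 0 N with p.Prime,
        if p ∣ n then (Real.log p : ℂ) * g n else 0 := by
        refine sum_congr rfl fun n hn => ?_
        rw [logRadical, hfactors n hn, Complex.ofReal_sum, sum_mul, sum_filter]
    _ = _ := by
        rw [sum_comm]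
        refine sum_congr rfl fun p hp => ?_
        rw [← sum_filter, sum_Ioc_filter_dvd N (mem_filter.1 hp).2.pos, mul_sum]

/-- The bilinear part `∑ log p e(mpα)` of a prime number sum, over primes `p ≥ z` and integers
`m > 1` having no prime factor below `z`, subject to `mp ≤ N`. -/
noncomputable def roughBilinearSum (z α : ℝ) (N : ℕ) : ℂ :=
  ∑ p ∈ Ioc 0 N with Nat.Prime p ∧ z ≤ (p : ℝ), (Real.log p : ℂ) *
    ∑ m ∈ Ioc 1 (N / p), (sifted (Nat.primesBelow ⌈z⌉₊) m : ℂ) * 𝐞 (m * (p * α))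

theorem sum_logRadical_mul_sifted_mul_fourierChar (z α : ℝ) (N : ℕ) :
    ∑ n ∈ Ioc 0 N, (logRadical n : ℂ) * (sifted (Nat.primesBelow ⌈z⌉₊) n * 𝐞 (n * α)) =
      ∑ p ∈ Ioc 0 N with Nat.Prime p ∧ z ≤ (p : ℝ), (Real.log p : ℂ) * 𝐞 (p * α) +
        roughBilinearSum z α N := by
  have hz : ∀ p ∈ Nat.primesBelow ⌈z⌉₊, p.Prime := fun _ => prime_of_mem_primesBelow_ceil
  rw [sum_Ioc_logRadical_mul, roughBilinearSum, ← sum_add_distrib, ← filter_filter,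
    sum_filter (p := fun p : ℕ => z ≤ p)]
  refine sum_congr rfl fun p hp => ?_
  rw [mem_filter, mem_Ioc] at hp
  have hsplit : ∀ m : ℕ, (sifted (Nat.primesBelow ⌈z⌉₊) (p * m) : ℂ) * 𝐞 ((p * m : ℕ) * α) =
      (if z ≤ p then 1 else 0 : ℝ) *
        (sifted (Nat.primesBelow ⌈z⌉₊) m * 𝐞 (m * (p * α))) := by
    intro m
    rw [sifted_apply_mul hz, sifted_primesBelow_of_prime hp.2, Complex.ofReal_mul, mul_assoc,
      Nat.cast_mul, mul_comm (p : ℝ), mul_assoc]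
  simp_rw [hsplit]
  rw [← mul_sum]
  split_ifs
  · rw [← sum_Ioc_consecutive _ zero_le_one (Nat.div_pos hp.1.2 hp.2.pos),
      show Ioc 0 1 = {1} from rfl, sum_singleton]
    simp [sifted_one hz, mul_add]
  · simp

theorem sum_Ioc_card_sq_dvd_le {k N : ℕ} (hk : 0 < k) :
    ∑ n ∈ Ioc 0 N, (#{d ∈ Ico k (N + 1) | d ^ 2 ∣ n} : ℝ) ≤ 2 * N / k := by
  obtain ⟨j, rfl⟩ := Nat.exists_eq_add_one.2 hk
  have hmultiples : ∀ d : ℕ, (#{n ∈ Ioc 0 N | d ^ 2 ∣ n} : ℝ) ≤ N * ((d : ℝ) ^ 2)⁻¹ := by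
    intro d
    rw [Nat.Ioc_filter_dvd_card_eq_div, ← div_eq_mul_inv, ← Nat.cast_pow]
    exact Nat.cast_div_le
  calc _ = ∑ d ∈ Ioo j (N + 1), (#{n ∈ Ioc 0 N | d ^ 2 ∣ n} : ℝ) := by
        exact_mod_cast sum_card_bipartiteAbove_eq_sum_card_bipartiteBelow fun n d => d ^ 2 ∣ n
    _ ≤ ∑ d ∈ Ioo j (N + 1), N * ((d : ℝ) ^ 2)⁻¹ := sum_le_sum fun d _ => hmultiples d
    _ ≤ N * (2 / (j + 1)) := by
        rw [← mul_sum]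
        exact mul_le_mul_of_nonneg_left (sum_Ioo_inv_sq_le j (N + 1)) N.cast_nonneg
    _ = 2 * N / (j + 1 : ℕ) := by push_cast; ring

theorem log_sub_logRadical_mul_sifted_le {z : ℝ} {n N : ℕ} (hn : n ∈ Ioc 0 N) :
    (Real.log n - logRadical n) * sifted (Nat.primesBelow ⌈z⌉₊) n ≤
      Real.log N * #{d ∈ Ico ⌈z⌉₊ (N + 1) | d ^ 2 ∣ n} := by
  rw [mem_Ioc] at hn
  have hrhs : 0 ≤ Real.log N * #{d ∈ Ico ⌈z⌉₊ (N + 1) | d ^ 2 ∣ n} :=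
    mul_nonneg (Real.log_natCast_nonneg N) (Nat.cast_nonneg _)
  by_cases hsq : Squarefree n
  · rwa [logRadical_of_squarefree hsq, sub_self, zero_mul]
  by_cases hrough : sifted (Nat.primesBelow ⌈z⌉₊) n = 0
  · rwa [hrough, mul_zero]
  obtain ⟨p, hp, hpn⟩ : ∃ p, p.Prime ∧ p * p ∣ n := by
    simpa [Nat.squarefree_iff_prime_squarefree] using hsq
  have hpn' : p ∣ n := (dvd_mul_right p p).trans hpn
  have hpz := le_of_prime_dvd_of_sifted_ne_zero hrough hp hpn'
  have hmem : p ∈ {d ∈ Ico ⌈z⌉₊ (N + 1) | d ^ 2 ∣ n} := by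
    rw [mem_filter, mem_Ico, pow_two]
    exact ⟨⟨Nat.ceil_le.2 hpz, Nat.lt_succ_of_le ((Nat.le_of_dvd hn.1 hpn').trans hn.2)⟩, hpn⟩
  refine mul_le_mul ?_ ?_ (sifted_nonneg _ n) (Real.log_natCast_nonneg N)
  · linarith [logRadical_nonneg n, monotone_log_natCast hn.2]
  · exact (sifted_le_one _ n).trans (Nat.one_le_cast.2 (card_pos.2 ⟨p, hmem⟩))

theorem norm_sum_log_sub_sum_logRadical_mul_sifted_le {z : ℝ} (hz : 0 < z) (α : ℝ) (N : ℕ) :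
    ‖∑ n ∈ Ioc 0 N, (Real.log n : ℂ) * (sifted (Nat.primesBelow ⌈z⌉₊) n * 𝐞 (n * α)) -
      ∑ n ∈ Ioc 0 N, (logRadical n : ℂ) * (sifted (Nat.primesBelow ⌈z⌉₊) n * 𝐞 (n * α))‖ ≤
      2 * N * Real.log N / z := by
  have hterm : ∀ n ∈ Ioc 0 N,
      ‖(Real.log n : ℂ) * (sifted (Nat.primesBelow ⌈z⌉₊) n * 𝐞 (n * α)) -
        (logRadical n : ℂ) * (sifted (Nat.primesBelow ⌈z⌉₊) n * 𝐞 (n * α))‖ ≤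
      Real.log N * #{d ∈ Ico ⌈z⌉₊ (N + 1) | d ^ 2 ∣ n} := by
    intro n hn
    rw [← sub_mul, ← mul_assoc, ← Complex.ofReal_sub, ← Complex.ofReal_mul,
      norm_ofReal_mul_fourierChar]
    · exact log_sub_logRadical_mul_sifted_le hn
    · exact mul_nonneg (sub_nonneg.2 (logRadical_le_log (mem_Ioc.1 hn).1)) (sifted_nonneg _ n)
  rw [← sum_sub_distrib]
  calc _ ≤ ∑ n ∈ Ioc 0 N, Real.log N * #{d ∈ Ico ⌈z⌉₊ (N + 1) | d ^ 2 ∣ n} :=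
        norm_sum_le_of_le _ hterm
    _ ≤ Real.log N * (2 * N / ⌈z⌉₊) := by
        rw [← mul_sum]
        exact mul_le_mul_of_nonneg_left (sum_Ioc_card_sq_dvd_le (Nat.ceil_pos.2 hz))
          (Real.log_natCast_nonneg N)
    _ ≤ Real.log N * (2 * N / z) := by
        have := Real.log_natCast_nonneg N
        gcongr
        exact Nat.le_ceil z
    _ = 2 * N * Real.log N / z := by ring

theorem norm_sum_log_mul_fourierChar_primes_lt_le {z : ℝ} (hz : 0 ≤ z) (α : ℝ) (N : ℕ) :
    ‖∑ p ∈ Ioc 0 N with Nat.Prime p ∧ ¬ z ≤ (p : ℝ), (Real.log p : ℂ) * 𝐞 (p * α)‖ ≤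
      Real.log 4 * z := by
  calc _ ≤ ∑ p ∈ Ioc 0 N with Nat.Prime p ∧ ¬ z ≤ (p : ℝ), Real.log p :=
        norm_sum_le_of_le _ fun p _ =>
          (norm_ofReal_mul_fourierChar (Real.log_natCast_nonneg p) _).le
    _ ≤ Chebyshev.theta z := by
        refine sum_le_sum_of_subset_of_nonneg (fun p hp => ?_)
          fun p _ _ => Real.log_natCast_nonneg p
        simp only [mem_filter, mem_Ioc, not_le] at hp ⊢
        exact ⟨⟨hp.1.1, Nat.le_floor hp.2.2.le⟩, hp.2.1⟩
    _ ≤ Real.log 4 * z := Chebyshev.theta_le_log4_mul_x hz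

theorem norm_sum_log_mul_fourierChar_primes_le {z : ℝ} (hz : 0 < z) (α : ℝ) (N : ℕ) :
    ‖∑ p ∈ Ioc 0 N with p.Prime, (Real.log p : ℂ) * 𝐞 (p * α)‖ ≤
      ‖∑ n ∈ Ioc 0 N, (Real.log n : ℂ) * (sifted (Nat.primesBelow ⌈z⌉₊) n * 𝐞 (n * α))‖ +
        2 * N * Real.log N / z + Real.log 4 * z + ‖roughBilinearSum z α N‖ := by
  have hradical := norm_sum_log_sub_sum_logRadical_mul_sifted_le hz α N
  rw [sum_logRadical_mul_sifted_mul_fourierChar] at hradical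
  set S := ∑ n ∈ Ioc 0 N, (Real.log n : ℂ) * (sifted (Nat.primesBelow ⌈z⌉₊) n * 𝐞 (n * α))
  set T := ∑ p ∈ Ioc 0 N with Nat.Prime p ∧ z ≤ (p : ℝ), (Real.log p : ℂ) * 𝐞 (p * α) with hT
  rw [← sum_filter_add_sum_filter_not _ (fun p : ℕ => z ≤ p), filter_filter, filter_filter, ← hT]
  have hlarge : ‖T‖ ≤ ‖S‖ + ‖S - (T + roughBilinearSum z α N)‖ + ‖roughBilinearSum z α N‖ :=
    calc ‖T‖ = ‖S - (S - (T + roughBilinearSum z α N)) - roughBilinearSum z α N‖ := by ring_nf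
      _ ≤ _ := (norm_sub_le _ _).trans (add_le_add_left (norm_sub_le _ _) _)
  refine (norm_add_le _ _).trans ?_
  linarith [norm_sum_log_mul_fourierChar_primes_lt_le hz.le α N]

end PrimesAndRoughNumbers

/-! ### Bilinear sums -/

section BilinearForms

variable {ι : Type*}

theorem norm_sum_ofReal_mul_sq_le {s : Finset ι} {c : ι → ℝ} (hc : ∀ i ∈ s, 0 ≤ c i) (F : ι → ℂ) :
    ‖∑ i ∈ s, (c i : ℂ) * F i‖ ^ 2 ≤ (∑ i ∈ s, c i) * ∑ i ∈ s, c i * ‖F i‖ ^ 2 := by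
  have htriangle : ‖∑ i ∈ s, (c i : ℂ) * F i‖ ≤ ∑ i ∈ s, c i * ‖F i‖ :=
    norm_sum_le_of_le s fun i hi => by rw [norm_mul, Complex.norm_of_nonneg (hc i hi)]
  exact (pow_le_pow_left₀ (norm_nonneg _) htriangle 2).trans
    (sum_sq_le_sum_mul_sum_of_sq_le_mul s hc (fun i hi => mul_nonneg (hc i hi) (sq_nonneg _))
      fun i _ => le_of_eq (by ring))

theorem sum_Ioc_sum_filter_le_comm {M : Type*} [AddCommMonoid M] (I : Finset ι) (X : ι → ℕ)
    (a b : ℕ) (f : ℕ → ι → M) :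
    ∑ m ∈ Ioc a b, ∑ i ∈ I with m ≤ X i, f m i = ∑ i ∈ I, ∑ m ∈ Ioc a (min b (X i)), f m i :=
  sum_comm' fun m i => by simp only [mem_Ioc, mem_filter, le_min_iff]; tauto

theorem ofReal_norm_sum_mul_fourierChar_sq (I : Finset ι) (l θ : ι → ℝ) (m : ℕ) :
    ((‖∑ i ∈ I, (l i : ℂ) * 𝐞 (m * θ i)‖ ^ 2 : ℝ) : ℂ) =
      ∑ i ∈ I, ∑ j ∈ I, (l i * l j : ℝ) * (𝐞 (m * (θ i - θ j)) : ℂ) := by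
  rw [Complex.ofReal_pow, ← Complex.mul_conj', map_sum, sum_mul_sum]
  refine sum_congr rfl fun i _ => sum_congr rfl fun j _ => ?_
  rw [map_mul (starRingEnd ℂ), Complex.conj_ofReal, ← Circle.coe_inv_eq_conj,
    ← AddChar.map_neg_eq_inv, mul_sub, sub_eq_add_neg, coe_fourierChar_add, Complex.ofReal_mul]
  ring

theorem sum_mul_norm_sum_mul_fourierChar_sq_le {u : ℕ → ℝ} (hu : ∀ m, 0 ≤ u m) (I : Finset ι)
    (l θ : ι → ℝ) {X : ι → ℕ} {M : ℕ} (hX : ∀ i ∈ I, X i ≤ M) :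
    ∑ m ∈ Ioc 0 M, u m * ‖∑ i ∈ I with m ≤ X i, (l i : ℂ) * 𝐞 (m * θ i)‖ ^ 2 ≤
      ∑ i ∈ I, ∑ j ∈ I, |l i * l j| *
        ‖∑ m ∈ Ioc 0 (min (X i) (X j)), (u m : ℂ) * 𝐞 (m * (θ i - θ j))‖ := by
  have hexpand :
      ((∑ m ∈ Ioc 0 M, u m * ‖∑ i ∈ I with m ≤ X i, (l i : ℂ) * 𝐞 (m * θ i)‖ ^ 2 : ℝ) : ℂ) =
        ∑ i ∈ I, ∑ j ∈ I, (l i * l j : ℝ) *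
          ∑ m ∈ Ioc 0 (min (X i) (X j)), (u m : ℂ) * 𝐞 (m * (θ i - θ j)) := by
    simp only [Complex.ofReal_sum, Complex.ofReal_mul (u _), ofReal_norm_sum_mul_fourierChar_sq,
      mul_sum]
    rw [sum_Ioc_sum_filter_le_comm]
    refine sum_congr rfl fun i hi => ?_
    rw [min_eq_right (hX i hi), sum_Ioc_sum_filter_le_comm]
    exact sum_congr rfl fun j _ => sum_congr rfl fun m _ => mul_left_comm _ _ _
  have hnonneg :=
    sum_nonneg fun m (_ : m ∈ Ioc 0 M) => mul_nonneg (hu m)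
      (sq_nonneg ‖∑ i ∈ I with m ≤ X i, (l i : ℂ) * 𝐞 (m * θ i)‖)
  rw [← Complex.norm_of_nonneg hnonneg, hexpand]
  refine norm_sum_le_of_le _ fun i _ => norm_sum_le_of_le _ fun j _ => ?_
  rw [norm_mul, Complex.norm_real, Real.norm_eq_abs]

theorem norm_sum_mul_sum_Ioc_mul_fourierChar_sq_le {c u : ℕ → ℝ} (hc : ∀ m, 0 ≤ c m)
    (hcu : ∀ m, c m ≤ u m) (I : Finset ι) (l θ : ι → ℝ) {X : ι → ℕ} {M : ℕ}
    (hX : ∀ i ∈ I, X i ≤ M) (a : ℕ) :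
    ‖∑ i ∈ I, (l i : ℂ) * ∑ m ∈ Ioc a (X i), (c m : ℂ) * 𝐞 (m * θ i)‖ ^ 2 ≤
      (∑ m ∈ Ioc 0 M, u m) * ∑ i ∈ I, ∑ j ∈ I, |l i * l j| *
        ‖∑ m ∈ Ioc 0 (min (X i) (X j)), (u m : ℂ) * 𝐞 (m * (θ i - θ j))‖ := by
  have hu : ∀ m, 0 ≤ u m := fun m => (hc m).trans (hcu m)
  have hswap : ∑ i ∈ I, (l i : ℂ) * ∑ m ∈ Ioc a (X i), (c m : ℂ) * 𝐞 (m * θ i) =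
      ∑ m ∈ Ioc a M, (c m : ℂ) * ∑ i ∈ I with m ≤ X i, (l i : ℂ) * 𝐞 (m * θ i) := by
    simp only [mul_sum]
    rw [sum_Ioc_sum_filter_le_comm]
    refine sum_congr rfl fun i hi => ?_
    rw [min_eq_right (hX i hi)]
    exact sum_congr rfl fun m _ => mul_left_comm _ _ _
  have hle : ∀ G : ℕ → ℝ, (∀ m, 0 ≤ G m) →
      ∑ m ∈ Ioc a M, c m * G m ≤ ∑ m ∈ Ioc 0 M, u m * G m := fun G hG =>
    (sum_le_sum fun m _ => mul_le_mul_of_nonneg_right (hcu m) (hG m)).trans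
      (sum_le_sum_of_subset_of_nonneg (Ioc_subset_Ioc_left a.zero_le) fun m _ _ =>
        mul_nonneg (hu m) (hG m))
  rw [hswap]
  refine (norm_sum_ofReal_mul_sq_le (fun m _ => hc m) _).trans (mul_le_mul ?_ ?_ ?_ ?_)
  · simpa using hle 1 fun _ => zero_le_one
  · exact (hle _ fun m => sq_nonneg _).trans
      (sum_mul_norm_sum_mul_fourierChar_sq_le hu I l θ hX)
  · exact sum_nonneg fun m _ => mul_nonneg (hc m) (sq_nonneg _)
  · exact sum_nonneg fun m _ => hu m

theorem sum_sum_le_of_card_filter_le {I : Finset ι} {r : ι → ι → Prop}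
    [∀ i, DecidablePred (r i)] {f : ι → ι → ℝ} {A A' C : ℝ} (hA : 0 ≤ A) (hA' : 0 ≤ A')
    (hC : ∀ i ∈ I, (#{j ∈ I | r i j} : ℝ) ≤ C) (hr : ∀ i ∈ I, ∀ j ∈ I, r i j → f i j ≤ A)
    (hnr : ∀ i ∈ I, ∀ j ∈ I, ¬ r i j → f i j ≤ A') :
    ∑ i ∈ I, ∑ j ∈ I, f i j ≤ #I * (C * A + #I * A') := by
  rw [← nsmul_eq_mul]
  refine sum_le_card_nsmul I _ _ fun i hi => ?_
  rw [← sum_filter_add_sum_filter_not I (r i)]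
  refine add_le_add ?_ ?_
  · refine (sum_le_card_nsmul _ _ A fun j hj => ?_).trans ?_
    · exact hr i hi j (mem_filter.1 hj).1 (mem_filter.1 hj).2
    · rw [nsmul_eq_mul]; exact mul_le_mul_of_nonneg_right (hC i hi) hA
  · refine (sum_le_card_nsmul _ _ A' fun j hj => ?_).trans ?_
    · exact hnr i hi j (mem_filter.1 hj).1 (mem_filter.1 hj).2
    · rw [nsmul_eq_mul]
      exact mul_le_mul_of_nonneg_right (Nat.cast_le.2 (card_filter_le _ _)) hA'

theorem norm_sum_mul_sum_Ioc_mul_fourierChar_sq_le_of_card_filter_le {c u : ℕ → ℝ}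
    (hc : ∀ m, 0 ≤ c m) (hcu : ∀ m, c m ≤ u m) {I : Finset ι} {l θ : ι → ℝ} {L : ℝ}
    (hl : ∀ i ∈ I, |l i| ≤ L) {X : ι → ℕ} {M : ℕ} (hX : ∀ i ∈ I, X i ≤ M)
    {r : ι → ι → Prop} [∀ i, DecidablePred (r i)] {A A' C : ℝ} (hA' : 0 ≤ A')
    (hA : ∀ Y ≤ M, ∑ m ∈ Ioc 0 Y, u m ≤ A)
    (hC : ∀ i ∈ I, (#{j ∈ I | r i j} : ℝ) ≤ C)
    (hnr : ∀ i ∈ I, ∀ j ∈ I, ¬ r i j → ∀ Y ≤ M,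
      ‖∑ m ∈ Ioc 0 Y, (u m : ℂ) * 𝐞 (m * (θ i - θ j))‖ ≤ A') (a : ℕ) :
    ‖∑ i ∈ I, (l i : ℂ) * ∑ m ∈ Ioc a (X i), (c m : ℂ) * 𝐞 (m * θ i)‖ ^ 2 ≤
      A * L ^ 2 * (#I * (C * A + #I * A')) := by
  have hu : ∀ m, 0 ≤ u m := fun m => (hc m).trans (hcu m)
  have hA0 : 0 ≤ A := (sum_nonneg fun m _ => hu m).trans (hA M le_rfl)
  have htrivial : ∀ Y ≤ M, ∀ t, ‖∑ m ∈ Ioc 0 Y, (u m : ℂ) * 𝐞 (m * t)‖ ≤ A := fun Y hY t =>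
    (norm_sum_le_of_le _ fun m _ => (norm_ofReal_mul_fourierChar (hu m) _).le).trans (hA Y hY)
  have hpairs := sum_sum_le_of_card_filter_le (I := I) (r := r)
    (f := fun i j => ‖∑ m ∈ Ioc 0 (min (X i) (X j)), (u m : ℂ) * 𝐞 (m * (θ i - θ j))‖)
    hA0 hA' hC (fun i hi j _ _ => htrivial _ ((min_le_left _ _).trans (hX i hi)) _)
    fun i hi j hj hij => hnr i hi j hj hij _ ((min_le_left _ _).trans (hX i hi))
  refine (norm_sum_mul_sum_Ioc_mul_fourierChar_sq_le hc hcu I l θ hX a).trans ?_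
  rw [mul_assoc]
  refine mul_le_mul (hA M le_rfl) ?_ (by positivity) hA0
  refine le_trans ?_ (mul_le_mul_of_nonneg_left hpairs (sq_nonneg L))
  rw [mul_sum]
  refine sum_le_sum fun i hi => ?_
  rw [mul_sum]
  refine sum_le_sum fun j hj => mul_le_mul_of_nonneg_right ?_ (norm_nonneg _)
  rw [abs_mul, pow_two]
  exact mul_le_mul (hl i hi) (hl j hj) (abs_nonneg _) ((abs_nonneg _).trans (hl i hi))

end BilinearForms

section SmallDenominators

theorem UpperSieve.card_filter_modEq_le {S : Finset ℕ} {D B x : ℝ} (s : UpperSieve S D B x)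
    {q : ℕ} (hq : 0 < q) (hSq : Disjoint S q.primeFactors) {a b : ℕ} (hab : a ≤ b) {I : Finset ℕ}
    (hI : I ⊆ Ioc a b) (hsifted : ∀ n ∈ I, sifted S n = 1) (r : ℕ) :
    (#{n ∈ I | n ≡ r [MOD q]} : ℝ) ≤ ((b : ℝ) - a) / q * s.vw + D := by
  have hcount := (abs_le.1 (s.isDivisorSum_w.abs_sum_Ioc_filter_modEq_sub_le hq hSq hab r)).2
  have hcard : (#{n ∈ I | n ≡ r [MOD q]} : ℝ) ≤ ∑ n ∈ Ioc a b with n ≡ r [MOD q], s.w n :=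
    calc (#{n ∈ I | n ≡ r [MOD q]} : ℝ) = ∑ n ∈ I with n ≡ r [MOD q], sifted S n := by
          rw [sum_congr rfl fun n hn => hsifted n (mem_filter.1 hn).1, cast_card]
      _ ≤ ∑ n ∈ I with n ≡ r [MOD q], s.w n := sum_le_sum fun n _ => s.sifted_le_w n
      _ ≤ _ := sum_le_sum_of_subset_of_nonneg (filter_subset_filter _ hI) fun n _ _ => s.w_nonneg n
  linarith

/-- Both variables are majorised by the sieve `s`, so that no logarithm is lost. -/
theorem UpperSieve.norm_sum_mul_sum_sifted_sq_le {S S' : Finset ℕ} {D x : ℝ}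
    (s : UpperSieve S D D x) (hD : 0 ≤ D) (hSS' : S ⊆ S') {q : ℕ}
    (hSq : Disjoint S q.primeFactors) {α Q : ℝ} (hA : IsDirichletDenom α Q q) {P : ℕ} (hP : 0 < P)
    (hDQ : D * P ≤ Q / 2) {I : Finset ℕ} (hI : I ⊆ Ico P (2 * P))
    (hsifted : ∀ p ∈ I, sifted S p = 1) {l : ℕ → ℝ} {L : ℝ} (hl : ∀ p ∈ I, |l p| ≤ L) (a N : ℕ) :
    ‖∑ p ∈ I, (l p : ℂ) * ∑ m ∈ Ioc a (N / p), (sifted S' m : ℂ) * 𝐞 (m * (p * α))‖ ^ 2 ≤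
      (N / P * s.vw + D) * L ^ 2 * ((P * s.vw + D) *
        ((P / q * s.vw + D) * (N / P * s.vw + D) + (P * s.vw + D) * (D * q))) := by
  have hv : 0 ≤ s.vw := s.isDivisorSum_w.density_nonneg s.w_nonneg
  have hI' : I ⊆ Ioc (P - 1) (2 * P - 1) := fun p hp => by
    have := mem_Ico.1 (hI hp)
    exact mem_Ioc.2 (by omega)
  have hcount (k : ℕ) (hk : 0 < k) (hSk : Disjoint S k.primeFactors) (r : ℕ) :
      (#{p ∈ I | p ≡ r [MOD k]} : ℝ) ≤ P / k * s.vw + D := by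
    have h := s.card_filter_modEq_le hk hSk (by omega) hI' hsifted r
    rwa [Nat.cast_sub (by omega), Nat.cast_sub (by omega), Nat.cast_mul, sub_sub_sub_cancel_right,
      Nat.cast_two, two_mul, add_sub_cancel_right] at h
  have hcard : (#I : ℝ) ≤ P * s.vw + D := by
    simpa [Nat.modEq_one] using hcount 1 one_pos (by simp) 0
  have hsum (Y : ℕ) (hY : Y ≤ N / P) : ∑ m ∈ Ioc 0 Y, s.w m ≤ N / P * s.vw + D := by
    have hle := (abs_le.1 (s.isDivisorSum_w.abs_sum_Ioc_sub_le Y)).2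
    have hYM : (Y : ℝ) ≤ N / P := (Nat.cast_le.2 hY).trans Nat.cast_div_le
    have := mul_le_mul_of_nonneg_right hYM hv
    linarith
  have hexp (p) (hp : p ∈ I) (p') (hp' : p' ∈ I) (hpp' : ¬ p' ≡ p [MOD q]) (Y : ℕ) :
      ‖∑ m ∈ Ioc 0 Y, (s.w m : ℂ) * 𝐞 (m * (p * α - p' * α))‖ ≤ D * q := by
    have hk : |(((p : ℤ) - p' : ℤ) : ℝ)| ≤ P := by
      have := mem_Ico.1 (hI hp)
      have := mem_Ico.1 (hI hp')
      exact_mod_cast abs_le.2 (show -(P : ℤ) ≤ p - p' ∧ (p : ℤ) - p' ≤ P by omega)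
    have h := s.isDivisorSum_w.norm_sum_mul_fourierChar_le hA (k := (p : ℤ) - p')
      (fun d hd _ hqd => hpp' <| Nat.modEq_iff_dvd.2 <|
        (Nat.isCoprime_iff_coprime.2 (coprime_of_mem_factoredNumbers hd hA.1.ne' hSq).symm
          ).dvd_of_dvd_mul_left hqd)
      ((mul_le_mul_of_nonneg_left hk hD).trans hDQ) Y
    simpa only [Int.cast_sub, Int.cast_natCast, sub_mul] using h
  have hbound := norm_sum_mul_sum_Ioc_mul_fourierChar_sq_le_of_card_filter_le
    (sifted_nonneg S') (fun m => (sifted_antitone hSS' m).trans (s.sifted_le_w m)) hl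
    (fun p hp => Nat.div_le_div_left (mem_Ico.1 (hI hp)).1 hP) (by positivity) hsum
    (fun p _ => hcount q hA.1 hSq p) (fun p hp p' hp' h Y _ => hexp p hp p' hp' h Y) a
  refine hbound.trans ?_
  gcongr

theorem bilinear_small_denominator_bound {y V v L M P q : ℝ} (hy : 2 ≤ y) (hq : 0 < q)
    (hqy : q ≤ y ^ 8) (hv : 0 ≤ v) (hvV : v ≤ V) (hyV : 1 / y ≤ V) (hM : y ^ 64 ≤ M)
    (hP : y ^ 64 / 2 ≤ P) :
    (M * v + y ^ 8) * L ^ 2 * ((P * v + y ^ 8) *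
        ((P / q * v + y ^ 8) * (M * v + y ^ 8) + (P * v + y ^ 8) * (y ^ 8 * q))) ≤
      24 * L ^ 2 * (M * P) ^ 2 * V ^ 4 / q := by
  have : 0 < y := by linarith
  have hpow {m n : ℕ} (hmn : m ≤ n) : y ^ m ≤ y ^ n := pow_le_pow_right₀ (by linarith) hmn
  have hV : 0 < V := lt_of_lt_of_le (by positivity) hyV
  have hM0 : 0 < M := lt_of_lt_of_le (by positivity) hM
  have hP0 : 0 < P := lt_of_lt_of_le (by positivity) hP
  have hMV : y ^ 63 ≤ M * V :=
    calc y ^ 63 = y ^ 64 * (1 / y) := by field_simp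
      _ ≤ M * V := by gcongr
  have hPV : y ^ 62 ≤ P * V := by
    have h63 : y ^ 63 ≤ P := by
      have : y ^ 63 * 2 ≤ y ^ 63 * y := by gcongr
      linarith [pow_succ y 63]
    calc y ^ 62 = y ^ 63 * (1 / y) := by field_simp
      _ ≤ P * V := by gcongr
  have hMv : M * v + y ^ 8 ≤ 2 * (M * V) := by
    have : M * v ≤ M * V := by gcongr
    linarith [hpow (show 8 ≤ 63 by norm_num)]
  have hPv : P * v + y ^ 8 ≤ 2 * (P * V) := by
    have : P * v ≤ P * V := by gcongr
    linarith [hpow (show 8 ≤ 62 by norm_num)]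
  have hPqv : P / q * v + y ^ 8 ≤ 2 * (P * V / q) := by
    have h16 : y ^ 8 * q ≤ P * V :=
      calc y ^ 8 * q ≤ y ^ 8 * y ^ 8 := by gcongr
        _ = y ^ 16 := by ring
        _ ≤ P * V := (hpow (by norm_num)).trans hPV
    have : P / q * v ≤ P * V / q := by rw [div_mul_eq_mul_div]; gcongr
    linarith [(le_div_iff₀ hq).2 h16]
  have hDq : y ^ 8 * q ≤ M * V / q := by
    rw [le_div_iff₀ hq]
    calc y ^ 8 * q * q ≤ y ^ 8 * y ^ 8 * y ^ 8 := by gcongr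
      _ = y ^ 24 := by ring
      _ ≤ M * V := (hpow (by norm_num)).trans hMV
  calc _ ≤ 2 * (M * V) * L ^ 2 * (2 * (P * V) *
        (2 * (P * V / q) * (2 * (M * V)) + 2 * (P * V) * (M * V / q))) := by gcongr
    _ = 24 * L ^ 2 * (M * P) ^ 2 * V ^ 4 / q := by ring

theorem exists_upperSieve_primesBelow_filter_not_dvd : ∃ K : ℝ, 1 ≤ K ∧
    ∀ (y : ℝ) (q : ℕ), 2 ≤ y → 0 < q →
      ∃ (x : ℝ) (s : UpperSieve {p ∈ Nat.primesBelow ⌈y⌉₊ | ¬ p ∣ q} (y ^ 8) (y ^ 8) x),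
        s.vw ≤ K * (q / q.totient) / Real.log y := by
  obtain ⟨K, hK, hsieve⟩ := exists_upperSieve
  refine ⟨K, hK, fun y q hy hq => ?_⟩
  obtain ⟨x, s, hvw, -⟩ := hsieve 0 y {p ∈ Nat.primesBelow ⌈y⌉₊ | ¬ p ∣ q} hy fun p hp =>
    mem_primesBelow_ceil.1 (mem_filter.1 hp).1
  refine ⟨x, s, ?_⟩
  rw [mul_div_assoc]
  refine hvw.trans (mul_le_mul_of_nonneg_left ?_ (by linarith))
  exact siftedDensity_primesBelow_filter_not_dvd_le (by linarith) hq

theorem exists_norm_sum_mul_sum_sifted_le_of_le_pow : ∃ K : ℝ, 1 ≤ K ∧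
    ∀ (y α : ℝ) (N P q : ℕ), 2 ≤ y → IsDirichletDenom α (N / y ^ 32) q → (q : ℝ) ≤ y ^ 8 →
      y ^ 64 / 2 ≤ P → P * y ^ 64 ≤ N → ∀ (I : Finset ℕ) (l : ℕ → ℝ) (L : ℝ), 0 ≤ L →
        I ⊆ Ico P (2 * P) → (∀ p ∈ I, p.Prime ∧ y ^ 64 ≤ p) →
        (∀ p ∈ I, |l p| ≤ L) → ∀ a : ℕ,
          ‖∑ p ∈ I, (l p : ℂ) * ∑ m ∈ Ioc a (N / p),
              (sifted (Nat.primesBelow ⌈y ^ 64⌉₊) m : ℂ) * 𝐞 (m * (p * α))‖ ≤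
            5 * L * N * (K * (q / q.totient) / Real.log y) ^ 2 / √q := by
  obtain ⟨K, hK, hsieve⟩ := exists_upperSieve_primesBelow_filter_not_dvd
  refine ⟨K, hK, fun y α N P q hy hA hqy hP hPN I l L hL hI hprime hl a => ?_⟩
  set S := {p ∈ Nat.primesBelow ⌈y⌉₊ | ¬ p ∣ q}
  have hS {p : ℕ} (hp : p ∈ S) : p.Prime ∧ (p : ℝ) < y :=
    mem_primesBelow_ceil.1 (mem_filter.1 hp).1
  have hSy {p : ℕ} (hp : p ∈ S) : (p : ℝ) < y ^ 64 :=
    (hS hp).2.trans_le (le_self_pow₀ (by linarith) (by norm_num))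
  obtain ⟨x, s, hvV⟩ := hsieve y q hy hA.1
  have hy0 : 0 < y := by linarith
  have hlog : 0 < Real.log y := Real.log_pos (by linarith)
  have hq : (0 : ℝ) < q := by exact_mod_cast hA.1
  have hP0 : (0 : ℝ) < P := lt_of_lt_of_le (by positivity) hP
  have hyV : 1 / y ≤ K * (q / q.totient) / Real.log y := by
    have := one_le_mul_of_one_le_of_one_le hK (one_le_div_totient hA.1)
    exact div_le_div₀ (by linarith) this hlog ((Real.log_le_sub_one_of_pos hy0).trans (by linarith))
  have hDQ : y ^ 8 * P ≤ N / y ^ 32 / 2 := by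
    rw [div_div, le_div_iff₀ (by positivity)]
    calc y ^ 8 * P * (y ^ 32 * 2) ≤ y ^ 8 * P * (y ^ 32 * y) := by gcongr
      _ = P * y ^ 41 := by ring
      _ ≤ P * y ^ 64 := by gcongr <;> linarith
      _ ≤ N := hPN
  have hbound := s.norm_sum_mul_sum_sifted_sq_le (by positivity)
    (fun p hp => mem_primesBelow_ceil.2 ⟨(hS hp).1, hSy hp⟩)
    (disjoint_left.2 fun p hp hpq => (mem_filter.1 hp).2 (Nat.dvd_of_mem_primeFactors hpq))
    hA (by exact_mod_cast hP0) hDQ hI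
    (fun p hp => if_pos fun r hr hrp => absurd
      ((Nat.prime_dvd_prime_iff_eq (hS hr).1 (hprime p hp).1).1 hrp ▸ hSy hr)
      (hprime p hp).2.not_gt) hl a N
  have hM : y ^ 64 ≤ N / P := (le_div_iff₀ hP0).2 (by linarith)
  have hreal := bilinear_small_denominator_bound (L := L) hy hq hqy
    (s.isDivisorSum_w.density_nonneg s.w_nonneg) hvV hyV hM hP
  rw [div_mul_cancel₀ _ hP0.ne'] at hreal
  refine (sq_le_sq₀ (norm_nonneg _) (by positivity)).1 ((hbound.trans hreal).trans ?_)
  rw [div_pow _ √(q : ℝ), Real.sq_sqrt hq.le, mul_pow, ← pow_mul, mul_pow, mul_pow]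
  gcongr
  norm_num

end SmallDenominators

section LargeDenominators

theorem card_le_of_abs_le_of_pairwise_le_abs_sub {ι : Type*} {s : Finset ι} {t : ι → ℝ}
    {δ ρ : ℝ} (hδ : 0 < δ) (hρ : 0 ≤ ρ) (ht : ∀ i ∈ s, |t i| ≤ ρ)
    (hs : (s : Set ι).Pairwise fun i j => δ ≤ |t i - t j|) : (#s : ℝ) ≤ 2 * ρ / δ + 2 := by
  have hcard : #s ≤ #(Icc ⌊-ρ / δ⌋ ⌊ρ / δ⌋) := by
    refine card_le_card_of_injOn (fun i => ⌊t i / δ⌋) (fun i hi => ?_) fun i hi j hj hij => ?_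
    · obtain ⟨hlo, hhi⟩ := abs_le.1 (ht i hi)
      rw [coe_Icc, Set.mem_Icc]
      exact ⟨Int.floor_le_floor (by gcongr), Int.floor_le_floor (by gcongr)⟩
    · by_contra hne
      have := Int.abs_sub_lt_one_of_floor_eq_floor hij
      rw [← sub_div, abs_div, abs_of_pos hδ, div_lt_one hδ] at this
      linarith [hs hi hj hne]
  have hρδ : -ρ / δ ≤ ρ / δ := by gcongr; linarith
  have hfloor : ⌊-ρ / δ⌋ ≤ ⌊ρ / δ⌋ := Int.floor_le_floor hρδ
  calc (#s : ℝ) ≤ #(Icc ⌊-ρ / δ⌋ ⌊ρ / δ⌋) := Nat.cast_le.2 hcard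
    _ = ⌊ρ / δ⌋ + 1 - ⌊-ρ / δ⌋ := by
        rw [Int.card_Icc, ← Int.cast_natCast, Int.toNat_of_nonneg (by omega)]
        push_cast
        rfl
    _ ≤ ρ / δ + 1 - (-ρ / δ - 1) := by
        gcongr
        · exact Int.floor_le _
        · exact (Int.sub_one_lt_floor _).le
    _ = 2 * ρ / δ + 2 := by ring

theorem card_image_div_le {I : Finset ℕ} {a b : ℕ} (hab : a ≤ b) (hI : I ⊆ Ico a b) {q : ℕ}
    (hq : 0 < q) : (#(I.image (· / q)) : ℝ) ≤ ((b : ℝ) - a) / q + 2 := by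
  have hq' : (0 : ℝ) < q := by exact_mod_cast hq
  have hsubset : I.image (· / q) ⊆ Icc (a / q) (b / q) := fun k hk => by
    obtain ⟨n, hn, rfl⟩ := mem_image.1 hk
    obtain ⟨han, hnb⟩ := mem_Ico.1 (hI hn)
    exact mem_Icc.2 ⟨Nat.div_le_div_right han, Nat.div_le_div_right hnb.le⟩
  have hfloor : (a : ℝ) / q ≤ (a / q : ℕ) + 1 := by
    rw [div_le_iff₀ hq']
    exact_mod_cast (Nat.lt_div_mul_add hq).le.trans_eq (Nat.succ_mul _ _).symm
  calc (#(I.image (· / q)) : ℝ) ≤ #(Icc (a / q) (b / q)) := Nat.cast_le.2 (card_le_card hsubset)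
    _ = (b / q : ℕ) + 1 - (a / q : ℕ) := by
        rw [Nat.card_Icc, Nat.cast_sub ((Nat.div_le_div_right hab).trans (Nat.le_succ _))]
        push_cast
        rfl
    _ ≤ b / q + 1 - (a / q - 1) := by
        gcongr
        · exact Nat.cast_div_le
        · linarith
    _ = ((b : ℝ) - a) / q + 2 := by ring

/-- In each interval of length `q` the points `nα` are `1 / (2 * q)`-separated modulo `1`. -/
theorem IsDirichletDenom.card_filter_abs_sub_round_lt_le {α Q : ℝ} {q : ℕ}
    (h : IsDirichletDenom α Q q) {a b : ℕ} (hab : a ≤ b) (hbQ : (b : ℝ) - a ≤ Q / 2)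
    {I : Finset ℕ} (hI : I ⊆ Ico a b) {ρ : ℝ} (hρ : 0 ≤ ρ) (x : ℝ) :
    (#(I.filter fun n : ℕ => |x - n * α - round (x - n * α)| < ρ) : ℝ) ≤
      (4 * ρ * q + 2) * (((b : ℝ) - a) / q + 2) := by
  have hq : (0 : ℝ) < q := by exact_mod_cast h.1
  set S := I.filter fun n : ℕ => |x - n * α - round (x - n * α)| < ρ
  have hfiber (k : ℕ) : (#{n ∈ S | n / q = k} : ℝ) ≤ 4 * ρ * q + 2 := by
    have hsep := card_le_of_abs_le_of_pairwise_le_abs_sub (s := {n ∈ S | n / q = k})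
      (t := fun n => x - n * α - round (x - n * α)) (δ := 1 / (2 * q)) (by positivity) hρ
      (fun n hn => (mem_filter.1 (mem_filter.1 hn).1).2.le) fun n hn n' hn' hne => by
        obtain ⟨hnS, rfl⟩ := mem_filter.1 hn
        obtain ⟨hnS', hnn'⟩ := mem_filter.1 hn'
        have hnI := mem_Ico.1 (hI (mem_filter.1 hnS).1)
        have hnI' := mem_Ico.1 (hI (mem_filter.1 hnS').1)
        have hdvd : ¬ (q : ℤ) ∣ (n' : ℤ) - n := fun hdvd =>
          hne (Nat.ext_div_mod hnn'.symm (Nat.modEq_iff_dvd.2 hdvd))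
        have hle : |(((n' : ℤ) - n : ℤ) : ℝ)| ≤ Q / 2 := by
          refine le_trans ?_ hbQ
          rw [← Int.cast_abs, ← Nat.cast_sub hab, ← Int.cast_natCast (b - a), Int.cast_le, abs_le]
          omega
        convert h.one_div_le_abs_sub hdvd hle
          (round (x - n * α) - round (x - n' * α)) using 2
        push_cast
        ring
    exact hsep.trans_eq (by field_simp; ring)
  have hcard := card_le_mul_card_image (f := (· / q)) S ⌊4 * ρ * q + 2⌋₊ fun k _ =>
    Nat.le_floor (hfiber k)
  calc (#S : ℝ) ≤ ⌊4 * ρ * q + 2⌋₊ * #(S.image (· / q)) := by exact_mod_cast hcard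
    _ ≤ (4 * ρ * q + 2) * (((b : ℝ) - a) / q + 2) := by
        gcongr
        · exact Nat.floor_le (by positivity)
        · exact card_image_div_le hab ((filter_subset _ _).trans hI) h.1

theorem IsDirichletDenom.norm_sum_mul_sum_sifted_sq_le {α Q : ℝ} {q : ℕ}
    (hA : IsDirichletDenom α Q q) {P : ℕ} (hP : 0 < P) (hPQ : P ≤ Q / 2) {I : Finset ℕ}
    (hI : I ⊆ Ico P (2 * P)) {l : ℕ → ℝ} {L : ℝ} (hl : ∀ p ∈ I, |l p| ≤ L) {ρ : ℝ} (hρ : 0 < ρ)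
    (S : Finset ℕ) (a N : ℕ) :
    ‖∑ p ∈ I, (l p : ℂ) * ∑ m ∈ Ioc a (N / p), (sifted S m : ℂ) * 𝐞 (m * (p * α))‖ ^ 2 ≤
      N / P * L ^ 2 * (P * ((4 * ρ * q + 2) * (P / q + 2) * (N / P) + P * (1 / (2 * ρ)))) := by
  have hP2 : ((2 * P : ℕ) : ℝ) - P = P := by push_cast; ring
  have hcount (p : ℕ) :
      (#(I.filter fun p' : ℕ => |p * α - p' * α - round (p * α - p' * α)| < ρ) : ℝ) ≤
        (4 * ρ * q + 2) * (P / q + 2) := by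
    have := hA.card_filter_abs_sub_round_lt_le (by omega) (by rwa [hP2]) hI hρ.le (p * α)
    rwa [hP2] at this
  have hcard : (#I : ℝ) ≤ P := by
    have := card_le_card hI
    rw [Nat.card_Ico, two_mul, Nat.add_sub_cancel] at this
    exact_mod_cast this
  have hbound := norm_sum_mul_sum_Ioc_mul_fourierChar_sq_le_of_card_filter_le
    (sifted_nonneg S) (sifted_le_one S) hl
    (fun p hp => Nat.div_le_div_left (mem_Ico.1 (hI hp)).1 hP) (A := N / P) (A' := 1 / (2 * ρ))
    (by positivity)
    (fun Y hY => by simpa using (Nat.cast_le.2 hY).trans (Nat.cast_div_le (α := ℝ)))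
    (fun p _ => hcount p)
    (fun p _ p' _ h Y _ => by
      simpa using norm_sum_Ioc_fourierChar_mul_le hρ
        (fun m => (not_lt.1 h).trans (round_le _ m)) Y) a
  refine hbound.trans ?_
  gcongr

theorem bilinear_large_denominator_bound {y L M P q : ℝ} (hy : 2 ≤ y) (hqy : y ^ 8 < q)
    (hq : q ≤ M * P / y ^ 32) (hM : y ^ 64 ≤ M) (hP : y ^ 64 / 2 ≤ P) :
    M * L ^ 2 * (P * ((4 * (y ^ 4 / M) * q + 2) * (P / q + 2) * M + P * (1 / (2 * (y ^ 4 / M))))) ≤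
      19 * L ^ 2 * (M * P) ^ 2 / y ^ 4 := by
  have : 0 < y := by linarith
  have hpow {m n : ℕ} (hmn : m ≤ n) : y ^ m ≤ y ^ n := pow_le_pow_right₀ (by linarith) hmn
  have hM0 : 0 < M := lt_of_lt_of_le (by positivity) hM
  have hP0 : 0 < P := lt_of_lt_of_le (by positivity) hP
  have hq0 : 0 < q := lt_of_le_of_lt (by positivity) hqy
  have hρP : y ^ 4 / M * P ≤ P / y ^ 4 := by
    rw [div_mul_eq_mul_div, div_le_div_iff₀ hM0 (by positivity)]
    calc y ^ 4 * P * y ^ 4 = P * y ^ 8 := by ring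
      _ ≤ P * M := by gcongr; exact (hpow (by norm_num)).trans hM
  have hPq : P / q ≤ P / y ^ 4 := by
    gcongr
    exact (hpow (by norm_num)).trans hqy.le
  have hρq : y ^ 4 / M * q ≤ P / y ^ 4 :=
    calc y ^ 4 / M * q ≤ y ^ 4 / M * (M * P / y ^ 32) := by gcongr
      _ = P / y ^ 28 := by field_simp
      _ ≤ P / y ^ 4 := by gcongr 1; exact hpow (by norm_num)
  have hone : 1 ≤ P / y ^ 4 := by
    rw [le_div_iff₀ (by positivity), one_mul]
    have : y ^ 4 * 2 ≤ y ^ 4 * y := by gcongr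
    linarith [hpow (show 5 ≤ 64 by norm_num), pow_succ y 4]
  have hcount : (4 * (y ^ 4 / M) * q + 2) * (P / q + 2) ≤ 18 * (P / y ^ 4) := by
    have : (4 * (y ^ 4 / M) * q + 2) * (P / q + 2) =
        4 * (y ^ 4 / M * P) + 8 * (y ^ 4 / M * q) + 2 * (P / q) + 4 := by field_simp; ring
    linarith
  have hinv : 1 / (2 * (y ^ 4 / M)) ≤ M / y ^ 4 := by
    rw [show 1 / (2 * (y ^ 4 / M)) = M / y ^ 4 / 2 by field_simp]
    exact half_le_self (by positivity)
  calc _ ≤ M * L ^ 2 * (P * (18 * (P / y ^ 4) * M + P * (M / y ^ 4))) := by gcongr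
    _ = 19 * L ^ 2 * (M * P) ^ 2 / y ^ 4 := by ring

theorem IsDirichletDenom.norm_sum_mul_sum_sifted_le_of_pow_lt {y α : ℝ} {N P q : ℕ} (hy : 2 ≤ y)
    (hA : IsDirichletDenom α (N / y ^ 32) q) (hqN : (q : ℝ) ≤ N / y ^ 32) (hqy : y ^ 8 < q)
    (hP : y ^ 64 / 2 ≤ P) (hPN : P * y ^ 64 ≤ N) {I : Finset ℕ} (hI : I ⊆ Ico P (2 * P))
    {l : ℕ → ℝ} {L : ℝ} (hL : 0 ≤ L) (hl : ∀ p ∈ I, |l p| ≤ L) (S : Finset ℕ) (a : ℕ) :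
    ‖∑ p ∈ I, (l p : ℂ) * ∑ m ∈ Ioc a (N / p), (sifted S m : ℂ) * 𝐞 (m * (p * α))‖ ≤
      5 * L * N / y ^ 2 := by
  have : 0 < y := by linarith
  have hP0 : (0 : ℝ) < P := lt_of_lt_of_le (by positivity) hP
  have hPQ : (P : ℝ) ≤ N / y ^ 32 / 2 := by
    rw [div_div, le_div_iff₀ (by positivity)]
    calc (P : ℝ) * (y ^ 32 * 2) ≤ P * (y ^ 32 * y) := by gcongr
      _ = P * y ^ 33 := by ring
      _ ≤ P * y ^ 64 := by gcongr <;> linarith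
      _ ≤ N := hPN
  have hM : y ^ 64 ≤ N / P := (le_div_iff₀ hP0).2 (by linarith)
  have hMP : (N : ℝ) / P * P = N := div_mul_cancel₀ _ hP0.ne'
  have hρ : 0 < y ^ 4 / (N / P) := div_pos (by positivity) (lt_of_lt_of_le (by positivity) hM)
  have hbound := hA.norm_sum_mul_sum_sifted_sq_le (by exact_mod_cast hP0) hPQ hI hl hρ S a N
  have hreal := bilinear_large_denominator_bound (L := L) hy hqy (by rwa [hMP]) hM hP
  rw [hMP] at hreal
  refine (sq_le_sq₀ (norm_nonneg _) (by positivity)).1 ((hbound.trans hreal).trans ?_)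
  rw [div_pow, ← pow_mul, mul_pow, mul_pow]
  gcongr
  norm_num

end LargeDenominators

section RoughBilinearSum

theorem sum_sifted_mul_fourierChar_eq_zero {z t : ℝ} {M P : ℕ} (hM : M < P * z) {p : ℕ}
    (hp : P ≤ p) : ∑ m ∈ Ioc 1 (M / p), (sifted (Nat.primesBelow ⌈z⌉₊) m : ℂ) * 𝐞 (m * t) = 0 := by
  refine sum_eq_zero fun m hm => ?_
  obtain ⟨hm1, hmM⟩ := mem_Ioc.1 hm
  suffices sifted (Nat.primesBelow ⌈z⌉₊) m = 0 by simp [this]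
  by_contra hrough
  have hzm : z ≤ m := (le_of_prime_dvd_of_sifted_ne_zero hrough (Nat.minFac_prime hm1.ne')
    m.minFac_dvd).trans (by exact_mod_cast Nat.minFac_le (by omega))
  have hpm : p * m ≤ M := (Nat.mul_le_mul_left p hmM).trans (Nat.mul_div_le M p)
  refine hM.not_ge ?_
  calc (P : ℝ) * z ≤ P * m := by gcongr
    _ ≤ p * m := by gcongr
    _ ≤ M := by exact_mod_cast hpm

theorem norm_roughBilinearSum_le {z B : ℝ} (hB : 0 ≤ B) (α : ℝ) (N : ℕ)
    (h : ∀ P : ℕ, z / 2 ≤ P → P * z ≤ N → ∀ I ⊆ Ico P (2 * P),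
      (∀ p ∈ I, p.Prime ∧ z ≤ (p : ℝ)) → (∀ p ∈ I, |Real.log p| ≤ Real.log N) →
      ‖∑ p ∈ I, (Real.log p : ℂ) *
        ∑ m ∈ Ioc 1 (N / p), (sifted (Nat.primesBelow ⌈z⌉₊) m : ℂ) * 𝐞 (m * (p * α))‖ ≤ B) :
    ‖roughBilinearSum z α N‖ ≤ (Nat.log 2 N + 1) * B := by
  set I := {p ∈ Ioc 0 N | Nat.Prime p ∧ z ≤ (p : ℝ)} with hI
  have hIN : ∀ p ∈ I, p ≤ N := fun p hp => (mem_Ioc.1 (mem_filter.1 hp).1).2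
  have hmaps : ∀ p ∈ I, Nat.log 2 p ∈ range (Nat.log 2 N + 1) := fun p hp =>
    mem_range.2 (Nat.lt_succ_of_le (Nat.log_mono_right (hIN p hp)))
  have hblock : ∀ i ∈ range (Nat.log 2 N + 1), ‖∑ p ∈ I with Nat.log 2 p = i, (Real.log p : ℂ) *
      ∑ m ∈ Ioc 1 (N / p), (sifted (Nat.primesBelow ⌈z⌉₊) m : ℂ) * 𝐞 (m * (p * α))‖ ≤ B := by
    intro i _
    have hprime : ∀ p ∈ {p ∈ I | Nat.log 2 p = i}, p.Prime ∧ z ≤ (p : ℝ) := fun p hp =>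
      (mem_filter.1 (mem_filter.1 hp).1).2
    have hdyadic : {p ∈ I | Nat.log 2 p = i} ⊆ Ico (2 ^ i) (2 * 2 ^ i) := by
      intro p hp
      have hp0 := (hprime p hp).1.ne_zero
      obtain ⟨-, rfl⟩ := mem_filter.1 hp
      rw [mem_Ico, ← pow_succ']
      exact ⟨Nat.pow_log_le_self 2 hp0, Nat.lt_pow_succ_log_self one_lt_two p⟩
    obtain hempty | ⟨p, hp⟩ := {p ∈ I | Nat.log 2 p = i}.eq_empty_or_nonempty
    · rwa [hempty, sum_empty, norm_zero]
    by_cases hN : ((2 ^ i : ℕ) : ℝ) * z ≤ N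
    · refine h (2 ^ i) ?_ hN _ hdyadic hprime fun p hp => ?_
      · have : (p : ℝ) ≤ 2 * (2 ^ i : ℕ) := by exact_mod_cast (mem_Ico.1 (hdyadic hp)).2.le
        linarith [(hprime p hp).2]
      · rw [abs_of_nonneg (Real.log_natCast_nonneg p)]
        exact monotone_log_natCast (hIN p (mem_filter.1 hp).1)
    · rwa [sum_eq_zero, norm_zero]
      intro p hp
      rw [sum_sifted_mul_fourierChar_eq_zero (not_le.1 hN) (mem_Ico.1 (hdyadic hp)).1, mul_zero]
  rw [roughBilinearSum, ← hI, ← sum_fiberwise_of_maps_to hmaps]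
  calc _ ≤ ∑ _i ∈ range (Nat.log 2 N + 1), B := norm_sum_le_of_le _ hblock
    _ = (Nat.log 2 N + 1) * B := by rw [sum_const, card_range, nsmul_eq_mul, Nat.cast_add_one]

theorem natLog_two_add_one_le {N : ℕ} (hN : 3 ≤ N) : (Nat.log 2 N + 1 : ℝ) ≤ 3 * Real.log N := by
  have hone : 1 ≤ Real.log N := by
    rw [Real.le_log_iff_exp_le (by positivity)]
    linarith [Real.exp_one_lt_d9, show (3 : ℝ) ≤ N by exact_mod_cast hN]
  have hpow : (Nat.log 2 N : ℝ) * Real.log 2 ≤ Real.log N := by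
    rw [← Real.log_pow]
    exact_mod_cast monotone_log_natCast (Nat.pow_log_le_self 2 (by omega))
  have : (0 : ℝ) ≤ Nat.log 2 N := Nat.cast_nonneg _
  nlinarith [Real.log_two_gt_d9]

theorem exists_norm_roughBilinearSum_le :
    ∃ K, 1 ≤ K ∧ ∀ (y α : ℝ) (N q : ℕ), 2 ≤ y → 3 ≤ N → IsDirichletDenom α (N / y ^ 32) q →
      (q : ℝ) ≤ N / y ^ 32 →
      ‖roughBilinearSum (y ^ 64) α N‖ ≤
        15 * Real.log N ^ 2 * N *
          max ((K * (q / q.totient) / Real.log y) ^ 2 / √q) (1 / y ^ 2) := by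
  obtain ⟨K, hK, hsmall⟩ := exists_norm_sum_mul_sum_sifted_le_of_le_pow
  refine ⟨K, hK, fun y α N q hy hN hA hqN => ?_⟩
  have hlog := Real.log_natCast_nonneg N
  set B := max ((K * (q / q.totient) / Real.log y) ^ 2 / √q) (1 / y ^ 2)
  have : 0 ≤ B := le_max_of_le_right (by positivity)
  calc ‖roughBilinearSum (y ^ 64) α N‖ ≤ (Nat.log 2 N + 1) * (5 * Real.log N * N * B) := by
        refine norm_roughBilinearSum_le (by positivity) α N fun P hP hPN I hI hprime hl => ?_
        obtain hqy | hqy := le_or_gt (q : ℝ) (y ^ 8)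
        · calc _ ≤ _ := hsmall y α N P q hy hA hqy hP hPN I (fun p => Real.log p) _ hlog hI
                hprime hl 1
            _ = 5 * Real.log N * N * ((K * (q / q.totient) / Real.log y) ^ 2 / √q) := by ring
            _ ≤ 5 * Real.log N * N * B := by gcongr; exact le_max_left _ _
        · calc _ ≤ _ := hA.norm_sum_mul_sum_sifted_le_of_pow_lt hy hqN hqy hP hPN hI hlog hl _ 1
            _ = 5 * Real.log N * N * (1 / y ^ 2) := by ring
            _ ≤ 5 * Real.log N * N * B := by gcongr; exact le_max_right _ _
    _ ≤ (3 * Real.log N) * (5 * Real.log N * N * B) := by gcongr; exact natLog_two_add_one_le hN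
    _ = 15 * Real.log N ^ 2 * N * B := by ring

theorem eventually_norm_roughBilinearSum_le {α : ℝ} (hα : Irrational α) {ε : ℝ} (hε : 0 < ε)
    (hε1 : ε ≤ 1) {η : ℝ} (hη : 0 < η) :
    ∀ᶠ N : ℕ in atTop, ‖roughBilinearSum ((N : ℝ) ^ ε) α N‖ ≤ η * N := by
  obtain ⟨K, hK, hbound⟩ := exists_norm_roughBilinearSum_le
  have hdenom : ∀ᶠ q : ℕ in atTop, (q / q.totient : ℝ) ^ 2 / √q ≤ η / (15 * (64 * K / ε) ^ 2) :=
    tendsto_div_totient_sq_div_sqrt.eventually_le_const (by positivity)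
  have hQ := tendsto_natCast_rpow_atTop (show 0 < 1 - ε / 2 by linarith)
  filter_upwards [eventually_ge_atTop 3,
    (tendsto_natCast_rpow_atTop (show 0 < ε / 64 by positivity)).eventually_ge_atTop 2,
    hQ.eventually (eventually_forall_isDirichletDenom hα hdenom), hQ.eventually_ge_atTop 1,
    eventually_rpow_mul_log_pow_le (show 1 - ε / 32 < 1 by linarith) 2
      (show 0 < η / 15 by positivity)] with N hN hy hq hQ1 hpow
  have hN0 : (0 : ℝ) < N := by positivity
  have hlogN : 0 < Real.log N := Real.log_pos (by exact_mod_cast (by omega : 1 < N))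
  set y : ℝ := (N : ℝ) ^ (ε / 64) with hyN
  have hypow (k : ℕ) : (N : ℝ) ^ (ε / 64 * k) = y ^ k := Real.rpow_mul_natCast hN0.le _ k
  have hNy (k : ℕ) : (N : ℝ) ^ (1 - ε / 64 * k) = N / y ^ k := by
    rw [Real.rpow_sub hN0, Real.rpow_one, hypow]
  rw [show 1 - ε / 2 = 1 - ε / 64 * (32 : ℕ) by push_cast; ring, hNy] at hq hQ1
  rw [show 1 - ε / 32 = 1 - ε / 64 * (2 : ℕ) by push_cast; ring, hNy] at hpow
  rw [show ε = ε / 64 * (64 : ℕ) by push_cast; ring, hypow]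
  obtain ⟨q, hqN, hA⟩ := exists_isDirichletDenom_le α hQ1
  refine (hbound y α N q hy hN hA hqN).trans ?_
  rw [mul_max_of_nonneg _ _ (by positivity), hyN, Real.log_rpow hN0, ← hyN]
  refine max_le ?_ ?_
  · calc _ = 15 * (64 * K / ε) ^ 2 * ((q / q.totient : ℝ) ^ 2 / √q) * N := by field_simp
      _ ≤ 15 * (64 * K / ε) ^ 2 * (η / (15 * (64 * K / ε) ^ 2)) * N := by
        gcongr _ * ?_ * _
        exact hq q hA
      _ = η * N := by field_simp
  · calc _ = 15 * (N / y ^ 2 * Real.log N ^ 2) := by ring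
      _ ≤ 15 * (η / 15 * N) := by gcongr
      _ = η * N := by ring

end RoughBilinearSum

/-! ### Exponential sums over primes -/

section PrimeExponentialSums

theorem eventually_norm_sum_log_mul_fourierChar_primes_le {α : ℝ} (hα : Irrational α) {η : ℝ}
    (hη : 0 < η) : ∀ᶠ N : ℕ in atTop,
      ‖∑ p ∈ Ioc 0 N with p.Prime, (Real.log p : ℂ) * 𝐞 (p * α)‖ ≤ η * N := by
  obtain ⟨ε, hε, hε1, hrough⟩ :=
    exists_eventually_norm_sum_sifted_le hα (show 0 < η / 8 by positivity)
  have : 0 < Real.log 4 := Real.log_pos (by norm_num)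
  filter_upwards [hrough,
    eventually_norm_roughBilinearSum_le hα hε (by linarith) (show 0 < η / 4 by positivity),
    eventually_rpow_mul_log_pow_le (show 1 - ε < 1 by linarith) 1 (show 0 < η / 8 by positivity),
    eventually_rpow_mul_log_pow_le (show ε < 1 by linarith) 0
      (show 0 < η / (4 * Real.log 4) by positivity),
    eventually_ge_atTop 2] with N hrough hbilinear hsquares hsmall hN
  have hN0 : (0 : ℝ) < N := by positivity
  have hlogN : 0 < Real.log N := Real.log_pos (by exact_mod_cast hN)
  have hrough' : ‖∑ n ∈ Ioc 0 N, (Real.log n : ℂ) *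
      (sifted (Nat.primesBelow ⌈(N : ℝ) ^ ε⌉₊) n * 𝐞 (n * α))‖ ≤ η / 4 * N :=
    calc _ ≤ 2 * (η / 8 * N / Real.log N) * Real.log N := norm_sum_Ioc_log_mul_le hrough
      _ = η / 4 * N := by field_simp; ring
  have hsquares' : 2 * N * Real.log N / (N : ℝ) ^ ε ≤ η / 4 * N := by
    rw [Real.rpow_sub hN0, Real.rpow_one, pow_one] at hsquares
    linear_combination 2 * hsquares
  have hsmall' : Real.log 4 * (N : ℝ) ^ ε ≤ η / 4 * N :=
    calc Real.log 4 * (N : ℝ) ^ ε ≤ Real.log 4 * (η / (4 * Real.log 4) * N) := by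
          rw [pow_zero, mul_one] at hsmall
          gcongr
      _ = η / 4 * N := by field_simp
  linarith [norm_sum_log_mul_fourierChar_primes_le (Real.rpow_pos_of_pos hN0 ε) α N]

theorem card_filter_prime_Ioc (N : ℕ) : #{p ∈ Ioc 0 N | p.Prime} = N.primeCounting := by
  rw [← Nat.primesLE_card_eq_primeCounting]
  congr 1
  ext p
  simp only [mem_filter, mem_Ioc, Nat.mem_primesLE]
  exact ⟨fun hp => ⟨hp.1.2, hp.2⟩, fun hp => ⟨⟨hp.2.pos, hp.1⟩, hp.2⟩⟩

theorem eventually_primeCounting_mul_log_sub_theta_le {η : ℝ} (hη : 0 < η) :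
    ∀ᶠ N : ℕ in atTop, N.primeCounting * Real.log N - Chebyshev.theta N ≤ η * N := by
  obtain ⟨C, -, hbound⟩ := Chebyshev.primeCounting_sub_theta_div_log_isBigO.exists_pos
  have hlog : Tendsto (fun N : ℕ => Real.log N) atTop atTop :=
    Real.tendsto_log_atTop.comp tendsto_natCast_atTop_atTop
  filter_upwards [tendsto_natCast_atTop_atTop.eventually hbound.bound,
    hlog.eventually_ge_atTop (C / η), hlog.eventually_gt_atTop 0] with N hN hC hlogN
  rw [Nat.floor_natCast, Real.norm_of_nonneg (r := N / Real.log N ^ 2) (by positivity)] at hN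
  calc _ = (N.primeCounting - Chebyshev.theta N / Real.log N) * Real.log N := by field_simp
    _ ≤ C * (N / Real.log N ^ 2) * Real.log N := by gcongr; exact (le_abs_self _).trans hN
    _ = C * (N / Real.log N) := by field_simp
    _ ≤ Real.log N * η * (N / Real.log N) := by gcongr; exact (div_le_iff₀ hη).1 hC
    _ = η * N := by field_simp

theorem eventually_div_four_le_primeCounting_mul_log :
    ∀ᶠ N : ℕ in atTop, (N : ℝ) / 4 ≤ N.primeCounting * Real.log N := by
  filter_upwards [eventually_ge_atTop 3, eventually_rpow_mul_log_pow_le zero_lt_one 1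
    (show (0 : ℝ) < 1 / 8 by norm_num)] with N hN hlog
  have hN0 : (0 : ℝ) < N := by positivity
  have hpi := Chebyshev.pi_ge N
  rw [div_le_iff₀ (Real.log_pos (by exact_mod_cast (by omega : 1 < N)))] at hpi
  have hlog_succ : Real.log (N + 1) ≤ 2 * Real.log N := by
    rw [← Real.log_rpow hN0]
    exact Real.log_le_log (by positivity) (by norm_cast; nlinarith)
  rw [Real.rpow_zero, one_mul, pow_one] at hlog
  nlinarith [Real.log_two_gt_d9]

theorem norm_log_mul_sum_sub_sum_log_mul_fourierChar_primes_le (α : ℝ) (N : ℕ) :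
    ‖(Real.log N : ℂ) * ∑ p ∈ Ioc 0 N with p.Prime, (𝐞 (p * α) : ℂ) -
      ∑ p ∈ Ioc 0 N with p.Prime, (Real.log p : ℂ) * 𝐞 (p * α)‖ ≤
      N.primeCounting * Real.log N - Chebyshev.theta N := by
  rw [mul_sum, ← sum_sub_distrib]
  calc _ ≤ ∑ p ∈ Ioc 0 N with p.Prime, (Real.log N - Real.log p) := by
        refine norm_sum_le_of_le _ fun p hp => ?_
        rw [← sub_mul, ← Complex.ofReal_sub, norm_ofReal_mul_fourierChar]
        exact sub_nonneg.2 (monotone_log_natCast (mem_Ioc.1 (mem_filter.1 hp).1).2)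
    _ = N.primeCounting * Real.log N - Chebyshev.theta N := by
        rw [sum_sub_distrib, sum_const, card_filter_prime_Ioc, nsmul_eq_mul, Chebyshev.theta,
          Nat.floor_natCast]

theorem eventually_norm_sum_fourierChar_primes_le {α : ℝ} (hα : Irrational α) {η : ℝ}
    (hη : 0 < η) : ∀ᶠ N : ℕ in atTop,
      ‖∑ p ∈ Ioc 0 N with p.Prime, (𝐞 (p * α) : ℂ)‖ ≤ η * N.primeCounting := by
  filter_upwards [eventually_ge_atTop 2, eventually_div_four_le_primeCounting_mul_log,
    eventually_primeCounting_mul_log_sub_theta_le (show 0 < η / 8 by positivity),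
    eventually_norm_sum_log_mul_fourierChar_primes_le hα (show 0 < η / 8 by positivity)]
    with N hN hpi htheta hsum
  have hlogN : 0 < Real.log N := Real.log_pos (by exact_mod_cast hN)
  refine le_of_mul_le_mul_left ?_ hlogN
  calc Real.log N * ‖∑ p ∈ Ioc 0 N with p.Prime, (𝐞 (p * α) : ℂ)‖
      = ‖(Real.log N : ℂ) * ∑ p ∈ Ioc 0 N with p.Prime, (𝐞 (p * α) : ℂ)‖ := by
        rw [norm_mul, Complex.norm_of_nonneg hlogN.le]
    _ ≤ η / 8 * N + η / 8 * N := by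
        rw [← sub_add_cancel ((Real.log N : ℂ) * _)
          (∑ p ∈ Ioc 0 N with p.Prime, (Real.log p : ℂ) * 𝐞 (p * α))]
        exact norm_add_le_of_le
          ((norm_log_mul_sum_sub_sum_log_mul_fourierChar_primes_le α N).trans htheta) hsum
    _ = η * (N / 4) := by ring
    _ ≤ η * (N.primeCounting * Real.log N) := by gcongr
    _ = Real.log N * (η * N.primeCounting) := by ring

theorem Ioc_filter_prime_nth (l : ℕ) :
    {p ∈ Ioc 0 (Nat.nth Nat.Prime l) | p.Prime} = (range (l + 1)).image (Nat.nth Nat.Prime) := by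
  ext p
  simp only [mem_filter, mem_Ioc, mem_image, mem_range, Nat.lt_succ_iff]
  constructor
  · rintro ⟨⟨-, hpl⟩, hp⟩
    refine ⟨Nat.count Nat.Prime p, ?_, Nat.nth_count hp⟩
    rwa [← Nat.nth_le_nth Nat.infinite_setOfPred_prime, Nat.nth_count hp]
  · rintro ⟨j, hj, rfl⟩
    have hp := Nat.prime_nth_prime j
    exact ⟨⟨hp.pos, (Nat.nth_le_nth Nat.infinite_setOfPred_prime).2 hj⟩, hp⟩

theorem tendsto_sum_fourierChar_nth_prime_div {α : ℝ} (hα : Irrational α) :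
    Tendsto (fun l : ℕ => (∑ j ∈ range l, (𝐞 (Nat.nth Nat.Prime j * α) : ℂ)) / (l : ℂ)) atTop
      (nhds 0) := by
  rw [← tendsto_add_atTop_iff_nat 1, Metric.tendsto_nhds]
  intro η hη
  have hnth := (Nat.nth_strictMono Nat.infinite_setOfPred_prime).tendsto_atTop
  filter_upwards [hnth.eventually
    (eventually_norm_sum_fourierChar_primes_le hα (show 0 < η / 2 by positivity))] with l hl
  have hcount : (Nat.nth Nat.Prime l).primeCounting = l + 1 :=
    Nat.count_nth_succ_of_infinite Nat.infinite_setOfPred_prime l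
  rw [Ioc_filter_prime_nth, sum_image (Nat.nth_injective Nat.infinite_setOfPred_prime).injOn,
    hcount] at hl
  have hl0 : (0 : ℝ) < (l + 1 : ℕ) := by positivity
  rw [dist_zero_right, norm_div, Complex.norm_natCast, div_lt_iff₀ hl0]
  nlinarith

end PrimeExponentialSums

/-! ### Weyl's criterion -/

section Equidistribution

open MeasureTheory

section WeylCriterion

variable {T : ℝ} [hT : Fact (0 < T)]

theorem integral_fourier_haarAddCircle {n : ℤ} (hn : n ≠ 0) :
    ∫ x, fourier n x ∂(AddCircle.haarAddCircle (T := T)) = 0 :=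
  integral_eq_zero_of_add_right_eq_neg (fourier_add_half_inv_index hn hT.elim)

theorem tendsto_haarAddCircle_of_tendsto_integral_fourier {ι : Type*} {L : Filter ι}
    {μ : ι → ProbabilityMeasure (AddCircle T)}
    (h : ∀ n : ℤ, n ≠ 0 → Tendsto (fun i => ∫ x, fourier (T := T) n x ∂(μ i)) L (nhds 0)) :
    Tendsto μ L (nhds ⟨AddCircle.haarAddCircle, inferInstance⟩) := by
  have hspan : ∀ f ∈ Submodule.span ℂ (Set.range (fourier (T := T))),
      Tendsto (fun i => ∫ x, f x ∂(μ i)) L (nhds (∫ x, f x ∂AddCircle.haarAddCircle)) := by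
    intro f hf
    have hintegrable (ν : Measure (AddCircle T)) [IsProbabilityMeasure ν] (g : C(AddCircle T, ℂ)) :
        Integrable g ν :=
      g.continuous.integrable_of_hasCompactSupport (.of_compactSpace g)
    induction hf using Submodule.span_induction with
    | mem f hf =>
      obtain ⟨n, rfl⟩ := hf
      obtain rfl | hn := eq_or_ne n 0
      · simpa using tendsto_const_nhds
      · rw [integral_fourier_haarAddCircle hn]
        exact h n hn
    | zero => simpa using tendsto_const_nhds
    | add f g _ _ hf hg =>
      simp only [ContinuousMap.add_apply, integral_add (hintegrable _ f) (hintegrable _ g)]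
      exact hf.add hg
    | smul c f _ hf =>
      simp only [ContinuousMap.smul_apply, integral_smul]
      exact hf.const_smul c
  refine ProbabilityMeasure.tendsto_of_tight_of_separatesPoints ℂ .of_compactSpace
    (A := fourierSubalgebra.comap (BoundedContinuousFunction.toContinuousMapStarₐ ℂ)) ?_
    fun g hg => hspan g.toContinuousMap ?_
  · intro x y hxy
    obtain ⟨_, ⟨f, hf, rfl⟩, hne⟩ := fourierSubalgebra_separatesPoints hxy
    exact ⟨_, ⟨f, ⟨BoundedContinuousFunction.mkOfCompact f, hf, rfl⟩, rfl⟩, hne⟩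
  · rw [← fourierSubalgebra_coe]
    exact hg

end WeylCriterion

section EmpiricalMeasure

variable {X : Type*} [MeasurableSpace X]

/-- The uniform probability measure on the first `l + 1` terms of a sequence, counted with
multiplicity; the shift avoids the empty average. -/
noncomputable def empiricalMeasure (x : ℕ → X) (l : ℕ) : ProbabilityMeasure X :=
  ⟨((l + 1 : ℕ) : ENNReal)⁻¹ • ∑ j ∈ range (l + 1), Measure.dirac (x j), ⟨by
    simpa using ENNReal.inv_mul_cancel (by simp) (by finiteness)⟩⟩

theorem integral_empiricalMeasure [MeasurableSingletonClass X] (x : ℕ → X) (l : ℕ) (f : X → ℂ) :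
    ∫ y, f y ∂(empiricalMeasure x l) = (∑ j ∈ range (l + 1), f (x j)) / (l + 1 : ℕ) := by
  rw [empiricalMeasure, ProbabilityMeasure.coe_mk, integral_smul_measure,
    integral_finsetSum_measure fun j _ => integrable_dirac (by finiteness)]
  simp only [integral_dirac, ENNReal.toReal_inv, ENNReal.toReal_natCast]
  rw [Complex.real_smul, div_eq_inv_mul, Complex.ofReal_inv, Complex.ofReal_natCast]

theorem empiricalMeasure_real_apply (x : ℕ → X) (l : ℕ) {s : Set X} (hs : MeasurableSet s)
    [DecidablePred (· ∈ s)] :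
    (empiricalMeasure x l : Measure X).real s = #{j ∈ range (l + 1) | x j ∈ s} / (l + 1 : ℕ) := by
  have hcard : (∑ j ∈ range (l + 1), Measure.dirac (x j)) s = #{j ∈ range (l + 1) | x j ∈ s} := by
    simp only [Measure.finsetSum_apply, Measure.dirac_apply' _ hs, Set.indicator_apply,
      Pi.one_apply, sum_boole]
  rw [empiricalMeasure, ProbabilityMeasure.coe_mk, measureReal_ennreal_smul_apply, Measure.real,
    hcard, ENNReal.toReal_inv, ENNReal.toReal_natCast, ENNReal.toReal_natCast, div_eq_inv_mul]

end EmpiricalMeasure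

section Arcs

theorem volume_unitAddCircle_eq_haarAddCircle :
    (volume : Measure UnitAddCircle) = AddCircle.haarAddCircle := by
  simp [AddCircle.volume_eq_smul_haarAddCircle]

variable {a b : ℝ}

theorem coe_mem_image_coe_Ioo_iff (ha : 0 ≤ a) (hb : b ≤ 1) (t : ℝ) :
    (t : UnitAddCircle) ∈ ((↑) : ℝ → UnitAddCircle) '' Set.Ioo a b ↔
      Int.fract t ∈ Set.Ioo a b := by
  constructor
  · rintro ⟨s, hs, hst⟩
    rw [← AddCircle.coe_fract t] at hst
    have hs' : s ∈ Set.Ico (0 : ℝ) (0 + 1) := ⟨ha.trans hs.1.le, by linarith [hs.2]⟩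
    have ht' : Int.fract t ∈ Set.Ico (0 : ℝ) (0 + 1) :=
      ⟨Int.fract_nonneg t, by linarith [Int.fract_lt_one t]⟩
    rwa [← (AddCircle.coe_eq_coe_iff_of_mem_Ico hs' ht').1 hst]
  · exact fun ht => ⟨_, ht, AddCircle.coe_fract t⟩

theorem isOpen_image_coe_Ioo (a b : ℝ) : IsOpen (((↑) : ℝ → UnitAddCircle) '' Set.Ioo a b) :=
  QuotientAddGroup.isOpenMap_coe _ isOpen_Ioo

theorem volume_image_coe_Ioo (ha : 0 ≤ a) (hb : b ≤ 1) :
    volume (((↑) : ℝ → UnitAddCircle) '' Set.Ioo a b) = ENNReal.ofReal (b - a) := by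
  rw [AddCircle.add_projection_respects_measure 1 0 (isOpen_image_coe_Ioo a b).measurableSet,
    ← Real.volume_Ioo]
  congr 1
  ext t
  rw [Set.mem_inter_iff, Set.mem_preimage]
  refine (and_congr_left' (coe_mem_image_coe_Ioo_iff ha hb t)).trans ⟨?_, fun ht => ?_⟩
  · rintro ⟨hfract, ht0, ht1⟩
    obtain rfl | hlt := (ht1.trans_eq (zero_add 1)).eq_or_lt
    · simp [ha.not_gt] at hfract
    · rwa [Int.fract_eq_self.2 ⟨ht0.le, hlt⟩] at hfract
  · have hfract : Int.fract t = t := Int.fract_eq_self.2 ⟨ha.trans ht.1.le, ht.2.trans_le hb⟩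
    exact ⟨by rwa [hfract], ha.trans_lt ht.1, by linarith [ht.2]⟩

theorem frontier_image_coe_Ioo_subset (a b : ℝ) :
    frontier (((↑) : ℝ → UnitAddCircle) '' Set.Ioo a b) ⊆ {↑a, ↑b} := by
  have hclosed : IsClosed (((↑) : ℝ → UnitAddCircle) '' Set.Icc a b) :=
    (isCompact_Icc.image (AddCircle.continuous_mk' 1)).isClosed
  rw [(isOpen_image_coe_Ioo a b).frontier_eq]
  rintro _ ⟨hx, hx'⟩
  obtain ⟨t, ht, rfl⟩ := hclosed.closure_subset_iff.2 (Set.image_mono Set.Ioo_subset_Icc_self) hx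
  obtain rfl | rfl | ht := Set.eq_endpoints_or_mem_Ioo_of_mem_Icc ht
  · exact Or.inl rfl
  · exact Or.inr rfl
  · exact absurd (Set.mem_image_of_mem _ ht) hx'

theorem volume_frontier_image_coe_Ioo (a b : ℝ) :
    volume (frontier (((↑) : ℝ → UnitAddCircle) '' Set.Ioo a b)) = 0 := by
  have hpoint (x : UnitAddCircle) : volume {x} = 0 := by
    simpa using AddCircle.volume_closedBall (T := 1) (x := x) 0
  exact measure_mono_null (frontier_image_coe_Ioo_subset a b)
    (measure_union_null (hpoint _) (hpoint _))

end Arcs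

theorem tendsto_card_filter_fract_mem_Ioo_div (x : ℕ → ℝ)
    (h : ∀ n : ℤ, n ≠ 0 → Tendsto (fun l : ℕ =>
      (∑ j ∈ range l, fourier n (x j : UnitAddCircle)) / (l : ℂ)) atTop (nhds 0))
    {a b : ℝ} (ha : 0 ≤ a) (hab : a ≤ b) (hb : b ≤ 1) :
    Tendsto (fun l : ℕ => (#{j ∈ range l | Int.fract (x j) ∈ Set.Ioo a b} : ℝ) / (l : ℝ)) atTop
      (nhds (b - a)) := by
  classical
  set A : Set UnitAddCircle := (↑) '' Set.Ioo a b with hA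
  have hmeas : MeasurableSet A := (isOpen_image_coe_Ioo a b).measurableSet
  have hlim : Tendsto (empiricalMeasure fun j => (x j : UnitAddCircle)) atTop
      (nhds ⟨AddCircle.haarAddCircle, inferInstance⟩) := by
    refine tendsto_haarAddCircle_of_tendsto_integral_fourier fun n hn => ?_
    simp only [integral_empiricalMeasure]
    exact (tendsto_add_atTop_iff_nat 1).2 (h n hn)
  have hmass := ProbabilityMeasure.tendsto_measure_of_null_frontier_of_tendsto' hlim (E := A)
    (by
      rw [ProbabilityMeasure.coe_mk, ← volume_unitAddCircle_eq_haarAddCircle]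
      exact volume_frontier_image_coe_Ioo a b)
  simp only [ProbabilityMeasure.coe_mk, ← volume_unitAddCircle_eq_haarAddCircle] at hmass
  rw [hA, volume_image_coe_Ioo ha hb, ← hA] at hmass
  have hreal := (ENNReal.tendsto_toReal ENNReal.ofReal_ne_top).comp hmass
  rw [ENNReal.toReal_ofReal (sub_nonneg.2 hab)] at hreal
  rw [← tendsto_add_atTop_iff_nat 1]
  refine hreal.congr fun l => ?_
  rw [Function.comp_apply, ← Measure.real, empiricalMeasure_real_apply _ _ hmeas]
  simp only [hA, coe_mem_image_coe_Ioo_iff ha hb]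

end Equidistribution

/-- Vinogradov's prime equidistribution theorem. -/
theorem stmt1 (θ : ℝ) (hθ : Irrational θ) :
    ∀ a b : ℝ, 0 ≤ a → a < b → b ≤ 1 →
      Tendsto (fun ℓ : ℕ =>
        ((Finset.range ℓ).filter (fun j =>
          Int.fract ((Nat.nth Nat.Prime j : ℝ) * θ) ∈ Set.Ioo a b)).card / (ℓ : ℝ))
        atTop (nhds (b - a)) := by
  intro a b ha hab hb
  have fourier_eq (n : ℤ) (p : ℕ) :
      fourier n ((p * θ : ℝ) : UnitAddCircle) = (𝐞 (p * (n * θ)) : ℂ) := by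
    rw [fourier_coe_apply, Real.fourierChar_apply]
    congr 1
    push_cast
    ring
  refine tendsto_card_filter_fract_mem_Ioo_div _ (fun n hn => ?_) ha hab.le hb
  simp only [fourier_eq]
  exact tendsto_sum_fourierChar_nth_prime_div (hθ.intCast_mul hn)
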